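/- arXiv:1101.4522 — 2 statements merged into one kernel-verified Lean document; each statement's English description precedes it below -/
import Mathlib

section
/- Let m ≥ 1 be an integer, let H_{A'} and H_{B'} be finite-dimensional Hilbert spaces, let σ be a density operator on H_{A'} ⊗ H_{B'}, and let U_1, …, U_{2^m} be unitaries on H_{A'} ⊗ H_{B'}. Let |Φ⟩ = 2^{−m/2} ∑_{i=1}^{2^m} |i⟩_A |i⟩_B be the maximally entangled state on ℂ^{2^m} ⊗ ℂ^{2^m}, let U = ∑_{i=1}^{2^m} |i⟩⟨i|_A ⊗ |i⟩⟨i|_B ⊗ U_i, and let γ = U (|Φ⟩⟨Φ| ⊗ σ) U^†, a density operator on (ℂ^{2^m} ⊗ H_{A'}) ⊗ (ℂ^{2^m} ⊗ H_{B'}). Then the squashed entanglement of γ with respect to the bipartition AA' : BB' satisfies E_sq(γ) ≥ m. -/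
open scoped BigOperators
open Classical
open scoped ComplexOrder

noncomputable section

/-- Partial trace over the second tensor factor:
`(ptraceSnd M) a a' = ∑ b, M (a,b) (a',b)`. -/
def ptraceSnd {α β : Type*} [Fintype β] (M : Matrix (α × β) (α × β) ℂ) : Matrix α α ℂ :=
  Matrix.of fun a a' => ∑ b : β, M (a, b) (a', b)

/-- Von Neumann entropy (in bits) of a matrix, via the eigenvalues of a Hermitian matrix
(with the convention `0 * log₂ 0 = 0`, automatic since `Real.logb 2 0 = 0`). -/
def vnEntropy {ι : Type*} [Fintype ι] [DecidableEq ι] (ρ : Matrix ι ι ℂ) : ℝ :=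
  if h : ρ.IsHermitian then -∑ i, h.eigenvalues i * Real.logb 2 (h.eigenvalues i) else 0

/-- Entanglement of formation of a bipartite (density) matrix: the infimum of the average
entropy of entanglement over all finite pure-state ensembles for `ρ`. -/
def EoF {α β : Type*} [Fintype α] [DecidableEq α] [Fintype β] [DecidableEq β]
    (ρ : Matrix (α × β) (α × β) ℂ) : ℝ :=
  sInf {E : ℝ | ∃ (k : ℕ) (p : Fin k → ℝ) (ψ : Fin k → (α × β → ℂ)),
    (∀ i, 0 ≤ p i) ∧ (∑ i, p i = 1) ∧
    (∀ i, ∑ x, Complex.normSq (ψ i x) = 1) ∧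
    (∑ i, p i • Matrix.vecMulVec (ψ i) (star (ψ i)) = ρ) ∧
    E = ∑ i, p i * vnEntropy (ptraceSnd (Matrix.vecMulVec (ψ i) (star (ψ i))))}

/-- The antisymmetric projector `P₂^{(d)} = (1/2)(𝟙 - F)` on `ℂ^d ⊗ ℂ^d`. -/
def asymProj (d : ℕ) : Matrix (Fin d × Fin d) (Fin d × Fin d) ℂ :=
  Matrix.of fun p q => (1 / 2 : ℂ) *
    ((if p.1 = q.1 ∧ p.2 = q.2 then 1 else 0) - (if p.1 = q.2 ∧ p.2 = q.1 then 1 else 0))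

/-- The antisymmetric state `α_d = P₂^{(d)} / binom(d,2)`. -/
def antisymState (d : ℕ) : Matrix (Fin d × Fin d) (Fin d × Fin d) ℂ :=
  (1 / (Nat.choose d 2 : ℂ)) • asymProj d

/-- `α_d^{⊗n}`, viewed as a bipartite state on `((ℂ^d)^{⊗n})_A ⊗ ((ℂ^d)^{⊗n})_B`
(the `n` first tensor factors grouped on the `A` side, the `n` second ones on the `B` side). -/
def alphaPow (d n : ℕ) :
    Matrix ((Fin n → Fin d) × (Fin n → Fin d)) ((Fin n → Fin d) × (Fin n → Fin d)) ℂ :=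
  Matrix.of fun p q => ∏ i : Fin n, antisymState d (p.1 i, p.2 i) (q.1 i, q.2 i)

/-- `(P₂^{(d)})^{⊗n}`, viewed as an operator on `((ℂ^d)^{⊗n})_A ⊗ ((ℂ^d)^{⊗n})_B`
(the `n` first tensor factors grouped on the `A` side, the `n` second ones on the `B` side). -/
def asymPow (d n : ℕ) :
    Matrix ((Fin n → Fin d) × (Fin n → Fin d)) ((Fin n → Fin d) × (Fin n → Fin d)) ℂ :=
  Matrix.of fun p q => ∏ i : Fin n, asymProj d (p.1 i, p.2 i) (q.1 i, q.2 i)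

/-- The antisymmetrizer `P_k^{(d)} = (1/k!) ∑_{σ ∈ S_k} sgn(σ) U_σ` on `(ℂ^d)^{⊗k}`. -/
def asymProjK (d k : ℕ) : Matrix (Fin k → Fin d) (Fin k → Fin d) ℂ :=
  Matrix.of fun f g => (1 / (Nat.factorial k) : ℂ) *
    ∑ σ : Equiv.Perm (Fin k), ((Equiv.Perm.sign σ : ℤ) : ℂ) * (if f = g ∘ σ then 1 else 0)

/-- Quantum conditional mutual information `I(A;B|E) = H(AE) + H(BE) - H(ABE) - H(E)`
(in bits) of a tripartite (density) matrix. -/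
def condMutInfo {α β γ : Type*} [Fintype α] [DecidableEq α] [Fintype β] [DecidableEq β]
    [Fintype γ] [DecidableEq γ] (ρ : Matrix ((α × β) × γ) ((α × β) × γ) ℂ) : ℝ :=
  vnEntropy (Matrix.of fun p q : α × γ => ∑ b : β, ρ ((p.1, b), p.2) ((q.1, b), q.2))
  + vnEntropy (Matrix.of fun p q : β × γ => ∑ a : α, ρ ((a, p.1), p.2) ((a, q.1), q.2))
  - vnEntropy ρ
  - vnEntropy (Matrix.of fun e e' : γ => ∑ a : α, ∑ b : β, ρ ((a, b), e) ((a, b), e'))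

/-- Squashed entanglement: `E_sq(ρ_AB) = inf (1/2) I(A;B|E)` over all finite-dimensional
extensions `ρ_ABE` of `ρ_AB`. -/
def Esq {α β : Type*} [Fintype α] [DecidableEq α] [Fintype β] [DecidableEq β]
    (ρ : Matrix (α × β) (α × β) ℂ) : ℝ :=
  sInf {x : ℝ | ∃ (m : ℕ) (σ : Matrix ((α × β) × Fin m) ((α × β) × Fin m) ℂ),
    σ.PosSemidef ∧ σ.trace = 1 ∧ ptraceSnd σ = ρ ∧ x = (1 / 2) * condMutInfo σ}

/-- The operator norm `‖·‖_∞` of a matrix, acting on Euclidean space. -/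
def opNorm {ι : Type*} [Fintype ι] [DecidableEq ι] (M : Matrix ι ι ℂ) : ℝ :=
  ‖Matrix.toEuclideanCLM (𝕜 := ℂ) M‖

/-- A bipartite (density) matrix is separable if it is a finite convex combination of
product density matrices. -/
def IsSeparableMat {α β : Type*} [Fintype α] [Fintype β]
    (σ : Matrix (α × β) (α × β) ℂ) : Prop :=
  ∃ (k : ℕ) (p : Fin k → ℝ) (ρA : Fin k → Matrix α α ℂ) (ρB : Fin k → Matrix β β ℂ),
    (∀ i, 0 ≤ p i) ∧ (∑ i, p i = 1) ∧
    (∀ i, (ρA i).PosSemidef) ∧ (∀ i, (ρA i).trace = 1) ∧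
    (∀ i, (ρB i).PosSemidef) ∧ (∀ i, (ρB i).trace = 1) ∧
    σ = ∑ i, p i • Matrix.kroneckerMap (· * ·) (ρA i) (ρB i)

/-- The controlled unitary `U = ∑ᵢ |i⟩⟨i|_A ⊗ |i⟩⟨i|_B ⊗ Uᵢ` on
`ℂ^{2^m} ⊗ ℂ^{2^m} ⊗ (H_{A'} ⊗ H_{B'})`. -/
def keyU (m : ℕ) {α' β' : Type*} (U : Fin (2 ^ m) → Matrix (α' × β') (α' × β') ℂ) :
    Matrix ((Fin (2 ^ m) × Fin (2 ^ m)) × (α' × β'))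
      ((Fin (2 ^ m) × Fin (2 ^ m)) × (α' × β')) ℂ :=
  Matrix.of fun p q =>
    if p.1.1 = p.1.2 ∧ q.1.1 = q.1.2 ∧ p.1.1 = q.1.1 ∧ p.1.2 = q.1.2
    then U p.1.1 p.2 q.2 else 0

/-- `|Φ⟩⟨Φ| ⊗ σ` with `|Φ⟩ = 2^{-m/2} ∑ᵢ |i⟩|i⟩` the maximally entangled state of
rank `2^m`. -/
def phiSigma (m : ℕ) {α' β' : Type*} (σ : Matrix (α' × β') (α' × β') ℂ) :
    Matrix ((Fin (2 ^ m) × Fin (2 ^ m)) × (α' × β'))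
      ((Fin (2 ^ m) × Fin (2 ^ m)) × (α' × β')) ℂ :=
  Matrix.of fun p q =>
    (if p.1.1 = p.1.2 ∧ q.1.1 = q.1.2 then (1 / (2 ^ m : ℂ)) else 0) * σ p.2 q.2


/-! ### analytic part -/

lemma ssa_limit_sum {ι : Type*} [Fintype ι] (w p q : ι → ℝ) (hp : ∀ k, 0 ≤ p k) :
    Filter.Tendsto (fun s : ℝ => ∑ k, w k * p k * (Real.log (q k * s + p k) - Real.log (q k)))
      (nhdsWithin 0 (Set.Ioi 0))
      (nhds (∑ k, w k * p k * (Real.log (p k) - Real.log (q k)))) := by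
  apply tendsto_finsetSum
  intro k _
  rcases (hp k).eq_or_lt with h | h
  · simp [← h]
  · have hc : ContinuousAt
        (fun s : ℝ => w k * p k * (Real.log (q k * s + p k) - Real.log (q k))) 0 := by
      have : q k * 0 + p k ≠ 0 := by simpa using h.ne'
      fun_prop (disch := assumption)
    have := hc.tendsto.mono_left (nhdsWithin_le_nhds (s := Set.Ioi 0))
    simpa using this

lemma ssa_hasDeriv {ι : Type*} [Fintype ι] (w p q : ι → ℝ) (hp : ∀ k, 0 ≤ p k)
    (hq : ∀ k, 0 < q k) (t : ℝ) (ht : 0 ≤ t) :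
    HasDerivAt (fun t : ℝ => ∑ k, w k * p k * (Real.log (q k + t * p k) - Real.log (q k)))
      (∑ k, w k * (p k ^ 2 / (q k + t * p k))) t := by
  apply HasDerivAt.fun_sum
  intro k _
  have h0 : q k + t * p k ≠ 0 := by
    have := mul_nonneg ht (hp k); have := hq k; positivity
  have h1 : HasDerivAt (fun t : ℝ => q k + t * p k) (p k) t := by
    simpa using ((hasDerivAt_id t).mul_const (p k)).const_add (q k)
  have h2 := ((h1.log h0).sub_const (Real.log (q k))).const_mul (w k * p k)
  have e : w k * (p k ^ 2 / (q k + t * p k)) = w k * p k * (p k / (q k + t * p k)) := by ring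
  rw [e]
  exact h2

lemma ssa_analytic {ι κ : Type*} [Fintype ι] [Fintype κ] (w p q : ι → ℝ) (w' p' q' : κ → ℝ)
    (hp : ∀ k, 0 ≤ p k) (hq : ∀ k, 0 < q k) (hp' : ∀ k, 0 ≤ p' k) (hq' : ∀ k, 0 < q' k)
    (htr : ∑ k, w k * p k = ∑ k, w' k * p' k)
    (h : ∀ t : ℝ, 0 ≤ t → ∑ k, w' k * (p' k ^ 2 / (q' k + t * p' k)) ≤
      ∑ k, w k * (p k ^ 2 / (q k + t * p k))) :
    ∑ k, w' k * p' k * (Real.log (p' k) - Real.log (q' k)) ≤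
      ∑ k, w k * p k * (Real.log (p k) - Real.log (q k)) := by
  set G : ℝ → ℝ := fun t => (∑ k, w k * p k * (Real.log (q k + t * p k) - Real.log (q k))) -
    ∑ k, w' k * p' k * (Real.log (q' k + t * p' k) - Real.log (q' k)) with hG
  have hd : ∀ t, 0 ≤ t → HasDerivAt G ((∑ k, w k * (p k ^ 2 / (q k + t * p k))) -
      ∑ k, w' k * (p' k ^ 2 / (q' k + t * p' k))) t := fun t ht =>
    (ssa_hasDeriv w p q hp hq t ht).sub (ssa_hasDeriv w' p' q' hp' hq' t ht)
  have hmono : MonotoneOn G (Set.Ici 0) := by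
    apply monotoneOn_of_deriv_nonneg (convex_Ici 0)
    · intro t ht; exact (hd t ht).continuousAt.continuousWithinAt
    · intro t ht
      rw [interior_Ici] at ht
      exact (hd t (le_of_lt ht)).differentiableAt.differentiableWithinAt
    · intro t ht
      rw [interior_Ici] at ht
      rw [(hd t (le_of_lt ht)).deriv]
      exact sub_nonneg.2 (h t (le_of_lt ht))
  have hpos : ∀ t, 0 ≤ t → 0 ≤ G t := by
    intro t ht
    have := hmono (Set.mem_Ici.2 le_rfl) (Set.mem_Ici.2 ht) ht
    simpa [hG] using this
  have key : ∀ (ι : Type _) [Fintype ι] (w p q : ι → ℝ) (hp : ∀ k, 0 ≤ p k) (hq : ∀ k, 0 < q k)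
      (s : ℝ) (hs : 0 < s),
      ∑ k, w k * p k * (Real.log (q k + s⁻¹ * p k) - Real.log (q k)) =
      (∑ k, w k * p k * (Real.log (q k * s + p k) - Real.log (q k)))
        - (∑ k, w k * p k) * Real.log s := by
    intro ι _ w p q hp hq s hs
    rw [Finset.sum_mul, ← Finset.sum_sub_distrib]
    apply Finset.sum_congr rfl
    intro k _
    have h1 : q k + s⁻¹ * p k = (q k * s + p k) / s := by field_simp
    have h2 : q k * s + p k ≠ 0 := by have := hq k; have := hp k; positivity
    rw [h1, Real.log_div h2 hs.ne']
    ring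
  refine le_of_tendsto_of_tendsto (ssa_limit_sum w' p' q' hp') (ssa_limit_sum w p q hp) ?_
  filter_upwards [self_mem_nhdsWithin] with s hs
  have hs : 0 < s := hs
  have h1 := hpos s⁻¹ (inv_pos.2 hs).le
  simp only [hG] at h1
  have a1 := key ι w p q hp hq s hs
  have e2 : ∑ k, w' k * p' k * (Real.log (q' k + s⁻¹ * p' k) - Real.log (q' k)) =
      (∑ k, w' k * p' k * (Real.log (q' k * s + p' k) - Real.log (q' k)))
        - (∑ k, w' k * p' k) * Real.log s := by
    rw [Finset.sum_mul, ← Finset.sum_sub_distrib]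
    apply Finset.sum_congr rfl
    intro k _
    have h1 : q' k + s⁻¹ * p' k = (q' k * s + p' k) / s := by field_simp
    have h2 : q' k * s + p' k ≠ 0 := by have := hq' k; have := hp' k; positivity
    rw [h1, Real.log_div h2 hs.ne']
    ring
  rw [a1, e2, htr] at h1
  linarith

/-! ### variational formula -/

open Matrix in
lemma ssa_J_eq {ι : Type*} [Fintype ι] [DecidableEq ι] (P V Y : Matrix ι ι ℂ) (p q : ι → ℝ)
    (hP : P ∈ unitaryGroup ι ℂ) (hV : V ∈ unitaryGroup ι ℂ) (t : ℝ) :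
    2 * (trace ((V * Y * Pᴴ)ᴴ * (P * diagonal (fun i => (p i : ℂ)) * Pᴴ))).re
    - (trace ((V * Y * Pᴴ) * (V * Y * Pᴴ)ᴴ * (V * diagonal (fun i => (q i : ℂ)) * Vᴴ))).re
    - t * (trace ((V * Y * Pᴴ)ᴴ * (V * Y * Pᴴ) * (P * diagonal (fun i => (p i : ℂ)) * Pᴴ))).re
    = ∑ j, ∑ i, (2 * p i * (star (Y j i) * (Vᴴ * P) j i).re
        - (q j + t * p i) * Complex.normSq (Y j i)) := by
  have hP1 : Pᴴ * P = 1 := mem_unitaryGroup_iff'.1 hP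
  have hV1 : Vᴴ * V = 1 := mem_unitaryGroup_iff'.1 hV
  have e1 : trace ((V * Y * Pᴴ)ᴴ * (P * diagonal (fun i => (p i : ℂ)) * Pᴴ))
      = trace (Yᴴ * (Vᴴ * P) * diagonal (fun i => (p i : ℂ))) := by
    rw [← Matrix.mul_assoc, trace_mul_comm]
    simp only [conjTranspose_mul, conjTranspose_conjTranspose]
    simp only [← Matrix.mul_assoc]
    rw [hP1]; simp [Matrix.mul_assoc]
  have e2 : trace ((V * Y * Pᴴ) * (V * Y * Pᴴ)ᴴ * (V * diagonal (fun i => (q i : ℂ)) * Vᴴ))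
      = trace (Y * Yᴴ * diagonal (fun i => (q i : ℂ))) := by
    rw [← Matrix.mul_assoc, trace_mul_comm]
    simp only [conjTranspose_mul, conjTranspose_conjTranspose]
    have : Vᴴ * (V * Y * Pᴴ * (P * (Yᴴ * Vᴴ)) * (V * diagonal fun i => (q i : ℂ)))
      = (Vᴴ * V) * Y * (Pᴴ * P) * Yᴴ * (Vᴴ * V) * diagonal fun i => (q i : ℂ) := by
      simp only [Matrix.mul_assoc]
    rw [this, hP1, hV1]; simp
  have e3 : trace ((V * Y * Pᴴ)ᴴ * (V * Y * Pᴴ) * (P * diagonal (fun i => (p i : ℂ)) * Pᴴ))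
      = trace (Yᴴ * Y * diagonal (fun i => (p i : ℂ))) := by
    rw [← Matrix.mul_assoc, trace_mul_comm]
    simp only [conjTranspose_mul, conjTranspose_conjTranspose]
    have : Pᴴ * (P * (Yᴴ * Vᴴ) * (V * Y * Pᴴ) * (P * diagonal fun i => (p i : ℂ)))
      = (Pᴴ * P) * Yᴴ * (Vᴴ * V) * Y * (Pᴴ * P) * diagonal fun i => (p i : ℂ) := by
      simp only [Matrix.mul_assoc]
    rw [this, hP1, hV1]; simp
  rw [e1, e2, e3]
  generalize Vᴴ * P = u
  have f1 : (trace (Yᴴ * u * diagonal (fun i => (p i : ℂ)))).re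
      = ∑ j, ∑ i, p i * (star (Y j i) * u j i).re := by
    simp only [trace, diag_apply, mul_diagonal, Complex.re_sum]
    rw [Finset.sum_comm]
    apply Finset.sum_congr rfl
    intro i _
    rw [Complex.re_mul_ofReal, mul_apply, Complex.re_sum, Finset.sum_mul]
    simp [mul_comm]
  have f2 : (trace (Y * Yᴴ * diagonal (fun i => (q i : ℂ)))).re
      = ∑ j, ∑ i, q j * Complex.normSq (Y j i) := by
    simp only [trace, diag_apply, mul_diagonal, Complex.re_sum]
    apply Finset.sum_congr rfl
    intro i _
    rw [Complex.re_mul_ofReal, mul_apply, Complex.re_sum, Finset.sum_mul]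
    simp [mul_comm, Complex.normSq_apply]
  have f3 : (trace (Yᴴ * Y * diagonal (fun i => (p i : ℂ)))).re
      = ∑ j, ∑ i, p i * Complex.normSq (Y j i) := by
    simp only [trace, diag_apply, mul_diagonal, Complex.re_sum]
    rw [Finset.sum_comm]
    apply Finset.sum_congr rfl
    intro i _
    rw [Complex.re_mul_ofReal, mul_apply, Complex.re_sum, Finset.sum_mul]
    simp [mul_comm, Complex.normSq_apply]
  rw [f1, f2, f3]
  simp only [Finset.mul_sum, ← Finset.sum_sub_distrib]
  apply Finset.sum_congr rfl
  intro j _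
  apply Finset.sum_congr rfl
  intro i _
  ring

lemma ssa_term_le (p q t : ℝ) (y u : ℂ) (h : 0 < q + t * p) :
    2 * p * (star y * u).re - (q + t * p) * Complex.normSq y
      ≤ Complex.normSq u * (p ^ 2 / (q + t * p)) := by
  set c := q + t * p
  rw [← mul_div_assoc, le_div_iff₀ h]
  simp only [Complex.normSq_apply, Complex.star_def, Complex.mul_re, Complex.conj_re,
    Complex.conj_im]
  nlinarith [sq_nonneg (c * y.re - p * u.re), sq_nonneg (c * y.im - p * u.im)]

lemma ssa_term_eq (p q t : ℝ) (u : ℂ) (h : 0 < q + t * p) :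
    2 * p * (star (((p / (q + t * p) : ℝ) : ℂ) * u) * u).re
      - (q + t * p) * Complex.normSq (((p / (q + t * p) : ℝ) : ℂ) * u)
      = Complex.normSq u * (p ^ 2 / (q + t * p)) := by
  set c := q + t * p
  simp only [Complex.normSq_apply, Complex.star_def, Complex.mul_re, Complex.conj_re,
    Complex.conj_im, map_mul, Complex.conj_ofReal, Complex.ofReal_re, Complex.ofReal_im,
    Complex.mul_im]
  field_simp
  ring

open Matrix in
lemma ssa_mono_t {ι κ : Type*} [Fintype ι] [DecidableEq ι] [Fintype κ] [DecidableEq κ]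
    (P V : Matrix ι ι ℂ) (p q : ι → ℝ) (P' V' : Matrix κ κ ℂ) (p' q' : κ → ℝ)
    (hP : P ∈ unitaryGroup ι ℂ) (hV : V ∈ unitaryGroup ι ℂ)
    (hP' : P' ∈ unitaryGroup κ ℂ) (hV' : V' ∈ unitaryGroup κ ℂ)
    (hp : ∀ k, 0 ≤ p k) (hq : ∀ k, 0 < q k) (hp' : ∀ k, 0 ≤ p' k) (hq' : ∀ k, 0 < q' k)
    (Θ : Matrix κ κ ℂ → Matrix ι ι ℂ) (hmul : ∀ X Y, Θ (X * Y) = Θ X * Θ Y)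
    (hstar : ∀ X, Θ Xᴴ = (Θ X)ᴴ)
    (hρ : ∀ Y, trace (Θ Y * (P * diagonal (fun i => (p i : ℂ)) * Pᴴ)) =
      trace (Y * (P' * diagonal (fun i => (p' i : ℂ)) * P'ᴴ)))
    (hσ : ∀ Y, trace (Θ Y * (V * diagonal (fun i => (q i : ℂ)) * Vᴴ)) =
      trace (Y * (V' * diagonal (fun i => (q' i : ℂ)) * V'ᴴ)))
    (t : ℝ) (ht : 0 ≤ t) :
    ∑ k : κ × κ, Complex.normSq ((V'ᴴ * P') k.1 k.2) * (p' k.2 ^ 2 / (q' k.1 + t * p' k.2)) ≤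
    ∑ k : ι × ι, Complex.normSq ((Vᴴ * P) k.1 k.2) * (p k.2 ^ 2 / (q k.1 + t * p k.2)) := by
  set Y' : Matrix κ κ ℂ :=
    Matrix.of fun j i => ((p' i / (q' j + t * p' i) : ℝ) : ℂ) * (V'ᴴ * P') j i with hY'
  have hc' : ∀ j i, 0 < q' j + t * p' i := fun j i =>
    add_pos_of_pos_of_nonneg (hq' j) (mul_nonneg ht (hp' i))
  have hc : ∀ j i, 0 < q j + t * p i := fun j i =>
    add_pos_of_pos_of_nonneg (hq j) (mul_nonneg ht (hp i))
  set X' := V' * Y' * P'ᴴ with hX'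
  set X := Θ X' with hX
  have hXY : V * (Vᴴ * X * P) * Pᴴ = X := by
    have h1 : V * Vᴴ = 1 := mem_unitaryGroup_iff.1 hV
    have h2 : P * Pᴴ = 1 := mem_unitaryGroup_iff.1 hP
    have : V * (Vᴴ * X * P) * Pᴴ = (V * Vᴴ) * X * (P * Pᴴ) := by simp only [Matrix.mul_assoc]
    rw [this, h1, h2]; simp
  have E1 := ssa_J_eq P V (Vᴴ * X * P) p q hP hV t
  have E2 := ssa_J_eq P' V' Y' p' q' hP' hV' t
  rw [hXY] at E1
  rw [← hX'] at E2
  rw [hX, ← hstar, ← hmul, ← hmul, hρ, hρ, hσ, E2] at E1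
  rw [Fintype.sum_prod_type, Fintype.sum_prod_type]
  calc _ = _ := by
        apply Finset.sum_congr rfl
        intro j _
        apply Finset.sum_congr rfl
        intro i _
        exact (ssa_term_eq (p' i) (q' j) t ((V'ᴴ * P') j i) (hc' j i)).symm
    _ = _ := E1
    _ ≤ _ := by
        apply Finset.sum_le_sum
        intro j _
        apply Finset.sum_le_sum
        intro i _
        exact ssa_term_le _ _ _ _ _ (hc j i)

/-! ### entropy in nats -/

/-- Entropy in nats, through the roots of the characteristic polynomial. -/
def nEnt {ι : Type*} [Fintype ι] [DecidableEq ι] (M : Matrix ι ι ℂ) : ℝ :=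
  (M.charpoly.roots.map (fun z => Real.negMulLog z.re)).sum

open Matrix in
lemma nEnt_diag {ι : Type*} [Fintype ι] [DecidableEq ι] (V : Matrix ι ι ℂ) (p : ι → ℝ)
    (hV : V ∈ unitaryGroup ι ℂ) :
    nEnt (V * diagonal (fun i => (p i : ℂ)) * Vᴴ) = ∑ i, Real.negMulLog (p i) := by
  have h1 : Vᴴ * V = 1 := mem_unitaryGroup_iff'.1 hV
  unfold nEnt
  rw [charpoly_mul_comm, ← Matrix.mul_assoc, h1, Matrix.one_mul, charpoly_diagonal,
    Polynomial.roots_prod]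
  · simp
  · simp [Finset.prod_ne_zero_iff, Polynomial.X_sub_C_ne_zero]

open Matrix in
lemma herm_exists_diag {ι : Type*} [Fintype ι] [DecidableEq ι] {M : Matrix ι ι ℂ}
    (hM : M.IsHermitian) :
    ∃ V : Matrix ι ι ℂ, V ∈ unitaryGroup ι ℂ ∧
      M = V * diagonal (fun i => (hM.eigenvalues i : ℂ)) * Vᴴ := by
  refine ⟨hM.eigenvectorUnitary, hM.eigenvectorUnitary.2, ?_⟩
  conv_lhs => rw [hM.spectral_theorem, Unitary.conjStarAlgAut_apply]
  rfl

open Matrix in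
lemma psd_exists_diag {ι : Type*} [Fintype ι] [DecidableEq ι] {M : Matrix ι ι ℂ}
    (hM : M.PosSemidef) :
    ∃ (V : Matrix ι ι ℂ) (p : ι → ℝ), V ∈ unitaryGroup ι ℂ ∧ (∀ i, 0 ≤ p i) ∧
      M = V * diagonal (fun i => (p i : ℂ)) * Vᴴ := by
  obtain ⟨V, hV, h⟩ := herm_exists_diag hM.1
  exact ⟨V, _, hV, fun i => hM.eigenvalues_nonneg i, h⟩

lemma vnEntropy_eq {ι : Type*} [Fintype ι] [DecidableEq ι] {M : Matrix ι ι ℂ}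
    (hM : M.IsHermitian) : vnEntropy M = nEnt M / Real.log 2 := by
  obtain ⟨V, hV, h⟩ := herm_exists_diag hM
  have : nEnt M = ∑ i, Real.negMulLog (hM.eigenvalues i) := by
    conv_lhs => rw [h]
    exact nEnt_diag V _ hV
  rw [this, vnEntropy, dif_pos hM, Finset.sum_div, ← Finset.sum_neg_distrib]
  apply Finset.sum_congr rfl
  intro i _
  rw [Real.negMulLog, Real.logb]
  ring

/-! ### strong subadditivity -/

open Matrix in
lemma unitary_col_sum {ι : Type*} [Fintype ι] [DecidableEq ι] (P V : Matrix ι ι ℂ)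
    (hP : P ∈ unitaryGroup ι ℂ) (hV : V ∈ unitaryGroup ι ℂ) (i : ι) :
    ∑ j, Complex.normSq ((Vᴴ * P) j i) = 1 := by
  have hP1 : Pᴴ * P = 1 := mem_unitaryGroup_iff'.1 hP
  have hV1 : V * Vᴴ = 1 := mem_unitaryGroup_iff.1 hV
  have h : (Vᴴ * P)ᴴ * (Vᴴ * P) = 1 := by
    rw [conjTranspose_mul, conjTranspose_conjTranspose]
    have : Pᴴ * V * (Vᴴ * P) = Pᴴ * (V * Vᴴ) * P := by simp only [Matrix.mul_assoc]
    rw [this, hV1, Matrix.mul_one, hP1]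
  have h2 := congrArg (fun M => (M i i).re) h
  simp only [mul_apply (M := (Vᴴ * P)ᴴ), conjTranspose_apply, one_apply_eq, Complex.re_sum,
    Complex.one_re] at h2
  rw [← h2]
  apply Finset.sum_congr rfl
  intro j _
  simp [Complex.normSq_apply]

open Matrix in
lemma rel_eq {ι : Type*} [Fintype ι] [DecidableEq ι] (P V : Matrix ι ι ℂ) (p q : ι → ℝ)
    (hP : P ∈ unitaryGroup ι ℂ) (hV : V ∈ unitaryGroup ι ℂ) :
    ∑ k : ι × ι, Complex.normSq ((Vᴴ * P) k.1 k.2) * p k.2 *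
      (Real.log (p k.2) - Real.log (q k.1))
    = - ∑ i, Real.negMulLog (p i) - ∑ j, Real.log (q j) *
      ((Vᴴ * (P * diagonal (fun i => (p i : ℂ)) * Pᴴ) * V) j j).re := by
  have a : ∑ k : ι × ι, Complex.normSq ((Vᴴ * P) k.1 k.2) * p k.2 * Real.log (p k.2)
      = - ∑ i, Real.negMulLog (p i) := by
    rw [Fintype.sum_prod_type_right, ← Finset.sum_neg_distrib]
    apply Finset.sum_congr rfl
    intro i _
    simp only [mul_assoc, ← Finset.sum_mul, unitary_col_sum P V hP hV i]
    simp [Real.negMulLog]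
  have b : ∑ k : ι × ι, Complex.normSq ((Vᴴ * P) k.1 k.2) * p k.2 * Real.log (q k.1)
      = ∑ j, Real.log (q j) *
      ((Vᴴ * (P * diagonal (fun i => (p i : ℂ)) * Pᴴ) * V) j j).re := by
    rw [Fintype.sum_prod_type]
    apply Finset.sum_congr rfl
    intro j _
    have : Vᴴ * (P * diagonal (fun i => (p i : ℂ)) * Pᴴ) * V =
      ((Vᴴ * P) * diagonal (fun i => (p i : ℂ))) * (Vᴴ * P)ᴴ := by
      rw [conjTranspose_mul, conjTranspose_conjTranspose]
      simp only [Matrix.mul_assoc]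
    rw [this, mul_apply, Complex.re_sum, Finset.mul_sum]
    apply Finset.sum_congr rfl
    intro i _
    rw [mul_diagonal, conjTranspose_apply]
    simp only [Complex.normSq_apply, Complex.star_def, Complex.mul_re, Complex.mul_im,
      Complex.conj_re, Complex.conj_im, Complex.ofReal_re, Complex.ofReal_im]
    ring
  rw [← a, ← b, ← Finset.sum_sub_distrib]
  apply Finset.sum_congr rfl
  intro k _
  ring

/-- Partial trace over the first factor. -/
def pfst {A K : Type*} [Fintype A] (M : Matrix (A × K) (A × K) ℂ) : Matrix K K ℂ :=
  Matrix.of fun k k' => ∑ a : A, M (a, k) (a, k')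

/-- Partial trace over the middle factor. -/
def pmid {A B E : Type*} [Fintype B] (M : Matrix (A × (B × E)) (A × (B × E)) ℂ) :
    Matrix (A × E) (A × E) ℂ :=
  Matrix.of fun x y => ∑ b : B, M (x.1, (b, x.2)) (y.1, (b, y.2))

/-- Tensoring with the identity in the middle factor. -/
def tmid {A B E : Type*} [DecidableEq B] (Y : Matrix (A × E) (A × E) ℂ) :
    Matrix (A × (B × E)) (A × (B × E)) ℂ :=
  Matrix.of fun x y => if x.2.1 = y.2.1 then Y (x.1, x.2.2) (y.1, y.2.2) else 0

set_option linter.unusedSectionVars false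
section
variable {A B E K : Type*} [Fintype A] [DecidableEq A] [Fintype B] [DecidableEq B]
  [Fintype E] [DecidableEq E] [Fintype K] [DecidableEq K]

open Matrix

lemma tmid_mul (X Y : Matrix (A × E) (A × E) ℂ) :
    tmid (B := B) (X * Y) = tmid X * tmid Y := by
  ext ⟨a, b, e⟩ ⟨a', b', e'⟩
  simp only [tmid, of_apply, mul_apply, Fintype.sum_prod_type]
  by_cases h : b = b'
  · subst h
    simp [Finset.sum_ite_irrel]
  · simp [h]

lemma tmid_star (X : Matrix (A × E) (A × E) ℂ) :
    tmid (B := B) Xᴴ = (tmid X)ᴴ := by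
  ext ⟨a, b, e⟩ ⟨a', b', e'⟩
  simp only [tmid, of_apply, conjTranspose_apply]
  by_cases h : b = b'
  · simp [h]
  · simp [h, Ne.symm h]

lemma tmid_trace (Y : Matrix (A × E) (A × E) ℂ) (M : Matrix (A × (B × E)) (A × (B × E)) ℂ) :
    trace (tmid Y * M) = trace (Y * pmid M) := by
  simp only [trace, diag_apply, tmid, of_apply, mul_apply, Fintype.sum_prod_type, pmid,
    Finset.mul_sum, ite_mul, zero_mul]
  apply Finset.sum_congr rfl
  intro a _
  rw [Finset.sum_comm]
  apply Finset.sum_congr rfl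
  intro e _
  rw [Finset.sum_comm]
  apply Finset.sum_congr rfl
  intro a' _
  rw [Finset.sum_comm' (t' := Finset.univ) (s' := fun _ => Finset.univ) (by simp)]
  simp only [Finset.sum_ite_irrel, Finset.sum_const_zero, Finset.sum_ite_eq',
    Finset.mem_univ, if_true]
  rw [Finset.sum_comm]

lemma kron_diag (F R : Matrix K K ℂ) (r : K → ℝ) (c : ℝ) (hF : F ∈ unitaryGroup K ℂ)
    (hR : R = F * diagonal (fun i => (r i : ℂ)) * Fᴴ) :
    kroneckerMap (· * ·) (1 : Matrix A A ℂ) F *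
      diagonal (fun x : A × K => ((r x.2 + c : ℝ) : ℂ)) *
      (kroneckerMap (· * ·) (1 : Matrix A A ℂ) F)ᴴ
    = kroneckerMap (· * ·) (1 : Matrix A A ℂ) (R + (c : ℂ) • 1) := by
  have h1 : diagonal (fun x : A × K => ((r x.2 + c : ℝ) : ℂ)) =
      kroneckerMap (· * ·) (1 : Matrix A A ℂ) (diagonal (fun i => (r i : ℂ)) + (c : ℂ) • 1) := by
    ext ⟨a, k⟩ ⟨a', k'⟩
    simp only [diagonal_apply, kroneckerMap_apply, one_apply, Matrix.add_apply, Matrix.smul_apply, Prod.mk.injEq]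
    by_cases h : a = a' <;> by_cases h' : k = k' <;> simp [h, h']
  have h2 : F * Fᴴ = 1 := mem_unitaryGroup_iff.1 hF
  rw [h1, conjTranspose_kronecker, ← mul_kronecker_mul, ← mul_kronecker_mul, hR]
  congr 1
  · simp
  · rw [Matrix.mul_add, Matrix.add_mul]
    simp [h2]

lemma kron_unitary (F : Matrix K K ℂ) (hF : F ∈ unitaryGroup K ℂ) :
    kroneckerMap (· * ·) (1 : Matrix A A ℂ) F ∈ unitaryGroup (A × K) ℂ := by
  have h2 : F * Fᴴ = 1 := mem_unitaryGroup_iff.1 hF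
  rw [mem_unitaryGroup_iff, star_eq_conjTranspose, conjTranspose_kronecker, ← mul_kronecker_mul,
    h2]
  simp

lemma kron_conj_sum (F : Matrix K K ℂ) (r : K → ℝ) (c : ℝ) (hF : F ∈ unitaryGroup K ℂ)
    (ρ : Matrix (A × K) (A × K) ℂ)
    (hR : pfst ρ = F * diagonal (fun i => (r i : ℂ)) * Fᴴ) :
    ∑ x : A × K, Real.log (r x.2 + c) * (((kroneckerMap (· * ·) (1 : Matrix A A ℂ) F)ᴴ * ρ *
      kroneckerMap (· * ·) (1 : Matrix A A ℂ) F) x x).re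
    = ∑ k, Real.log (r k + c) * r k := by
  rw [Fintype.sum_prod_type_right]
  apply Finset.sum_congr rfl
  intro k _
  simp only []
  rw [← Finset.mul_sum, ← Complex.re_sum]
  congr 1
  have h2 : Fᴴ * F = 1 := mem_unitaryGroup_iff'.1 hF
  have h3 : Fᴴ * pfst ρ * F = diagonal (fun i => (r i : ℂ)) := by
    have : Fᴴ * (F * diagonal (fun i => (r i : ℂ)) * Fᴴ) * F =
      (Fᴴ * F) * diagonal (fun i => (r i : ℂ)) * (Fᴴ * F) := by simp only [Matrix.mul_assoc]
    rw [hR, this, h2]; simp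
  have h4 : (Fᴴ * pfst ρ * F) k k = r k := by rw [h3]; simp
  have h5 : ∑ a : A, ((kroneckerMap (· * ·) (1 : Matrix A A ℂ) F)ᴴ * ρ *
      kroneckerMap (· * ·) (1 : Matrix A A ℂ) F) (a, k) (a, k) = (Fᴴ * pfst ρ * F) k k := by
    rw [conjTranspose_kronecker]
    simp only [mul_apply, Fintype.sum_prod_type, kroneckerMap_apply, conjTranspose_one, one_apply,
      pfst, of_apply, ite_mul, mul_ite, one_mul, zero_mul, mul_zero, Finset.sum_ite_irrel,
      Finset.sum_const_zero, Finset.sum_ite_eq, Finset.sum_ite_eq', Finset.mem_univ, if_true,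
      Finset.mul_sum, Finset.sum_mul]
    rw [Finset.sum_comm]
    apply Finset.sum_congr rfl
    intro k1 _
    rw [Finset.sum_comm]
  rw [h5, h4]
  simp

lemma pfst_psd {ρ : Matrix (A × K) (A × K) ℂ} (h : ρ.PosSemidef) : (pfst ρ).PosSemidef := by
  have : pfst ρ = ∑ a : A, ρ.submatrix (fun k => (a, k)) (fun k => (a, k)) := by
    ext k k'
    simp [pfst, Matrix.sum_apply]
  rw [this]
  exact posSemidef_sum _ fun a _ => h.submatrix _

lemma pmid_psd {ρ : Matrix (A × (B × E)) (A × (B × E)) ℂ} (h : ρ.PosSemidef) :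
    (pmid ρ).PosSemidef := by
  have : pmid ρ = ∑ b : B, ρ.submatrix (fun x : A × E => (x.1, (b, x.2)))
      (fun x => (x.1, (b, x.2))) := by
    ext k k'
    simp [pmid, Matrix.sum_apply]
  rw [this]
  exact posSemidef_sum _ fun a _ => h.submatrix _

lemma pfst_pmid (ρ : Matrix (A × (B × E)) (A × (B × E)) ℂ) :
    pfst (pmid ρ) = pfst (pfst ρ) := by
  ext e e'
  simp only [pfst, pmid, of_apply]
  rw [Finset.sum_comm]

lemma pmid_kron (R : Matrix (B × E) (B × E) ℂ) (c : ℝ) :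
    pmid (kroneckerMap (· * ·) (1 : Matrix A A ℂ) (R + (c : ℂ) • 1)) =
    kroneckerMap (· * ·) (1 : Matrix A A ℂ)
      (pfst R + ((Fintype.card B * c : ℝ) : ℂ) • 1) := by
  ext ⟨a, e⟩ ⟨a', e'⟩
  change ∑ b : B, (1 : Matrix A A ℂ) a a' * (R (b, e) (b, e') +
      (c : ℂ) * (1 : Matrix (B × E) (B × E) ℂ) (b, e) (b, e')) =
    (1 : Matrix A A ℂ) a a' * ((∑ b : B, R (b, e) (b, e')) +
      ((Fintype.card B * c : ℝ) : ℂ) * (1 : Matrix E E ℂ) e e')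
  rw [← Finset.mul_sum, Finset.sum_add_distrib]
  congr 2
  by_cases h : e = e'
  · subst h; simp
  · simp [one_apply, h]

lemma tendsto_ent (r : K → ℝ) (hr : ∀ k, 0 ≤ r k) (d : ℝ) :
    Filter.Tendsto (fun c : ℝ => ∑ k, Real.log (r k + d * c) * r k)
      (nhdsWithin 0 (Set.Ioi 0)) (nhds (- ∑ k, Real.negMulLog (r k))) := by
  rw [← Finset.sum_neg_distrib]
  apply tendsto_finsetSum
  intro k _
  rcases (hr k).eq_or_lt with h | h
  · simp [← h]
  · have hc : ContinuousAt (fun c : ℝ => Real.log (r k + d * c) * r k) 0 := by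
      have : r k + d * 0 ≠ 0 := by simpa using h.ne'
      fun_prop (disch := assumption)
    have := hc.tendsto.mono_left (nhdsWithin_le_nhds (s := Set.Ioi 0))
    simpa [Real.negMulLog, mul_comm] using this

theorem ssa_nats [Nonempty B] {ρ : Matrix (A × (B × E)) (A × (B × E)) ℂ} (h : ρ.PosSemidef) :
    nEnt ρ + nEnt (pfst (pmid ρ)) ≤ nEnt (pmid ρ) + nEnt (pfst ρ) := by
  obtain ⟨P, p, hP, hp, hρ⟩ := psd_exists_diag h
  obtain ⟨P', p', hP', hp', hρ'⟩ := psd_exists_diag (pmid_psd h)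
  obtain ⟨F, r, hF, hr, hR⟩ := psd_exists_diag (pfst_psd h)
  obtain ⟨F', r', hF', hr', hR'⟩ := psd_exists_diag (pfst_psd (pmid_psd h))
  have n1 : nEnt ρ = ∑ i, Real.negMulLog (p i) := by rw [hρ]; exact nEnt_diag P p hP
  have n2 : nEnt (pmid ρ) = ∑ i, Real.negMulLog (p' i) := by rw [hρ']; exact nEnt_diag P' p' hP'
  have n3 : nEnt (pfst ρ) = ∑ i, Real.negMulLog (r i) := by rw [hR]; exact nEnt_diag F r hF
  have n4 : nEnt (pfst (pmid ρ)) = ∑ i, Real.negMulLog (r' i) := by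
    rw [hR']; exact nEnt_diag F' r' hF'
  rw [n1, n2, n3, n4]
  have hd : (0 : ℝ) < Fintype.card B := by exact_mod_cast Fintype.card_pos
  have key : ∀ c : ℝ, 0 < c →
      - (∑ i, Real.negMulLog (p' i)) - ∑ k, Real.log (r' k + Fintype.card B * c) * r' k ≤
      - (∑ i, Real.negMulLog (p i)) - ∑ k, Real.log (r k + 1 * c) * r k := by
    intro c hc
    rw [one_mul]
    have hV := kron_unitary (A := A) F hF
    have hV' := kron_unitary (A := A) F' hF'
    have hq : ∀ x : A × (B × E), 0 < r x.2 + c := fun x => add_pos_of_nonneg_of_pos (hr _) hc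
    have hq' : ∀ x : A × E, 0 < r' x.2 + Fintype.card B * c := fun x =>
      add_pos_of_nonneg_of_pos (hr' _) (mul_pos hd hc)
    have hm := ssa_mono_t P (kroneckerMap (· * ·) (1 : Matrix A A ℂ) F) p (fun x => r x.2 + c)
      P' (kroneckerMap (· * ·) (1 : Matrix A A ℂ) F') p' (fun x => r' x.2 + Fintype.card B * c)
      hP hV hP' hV' hp hq hp' hq' tmid tmid_mul tmid_star
      (by intro Y; rw [← hρ, ← hρ']; exact tmid_trace Y ρ)
      (by
        intro Y
        rw [kron_diag F _ r c hF hR, kron_diag F' _ r' _ hF' hR', tmid_trace, pmid_kron,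
          pfst_pmid])
    have htr : ∀ {ι : Type _} [Fintype ι] [DecidableEq ι] (P V : Matrix ι ι ℂ) (p : ι → ℝ)
        (hP : P ∈ unitaryGroup ι ℂ) (hV : V ∈ unitaryGroup ι ℂ),
        ∑ k : ι × ι, Complex.normSq ((Vᴴ * P) k.1 k.2) * p k.2 =
          (trace (P * diagonal (fun i => (p i : ℂ)) * Pᴴ)).re := by
      intro ι _ _ P V p hP hV
      have h1 : Pᴴ * P = 1 := mem_unitaryGroup_iff'.1 hP
      rw [trace_mul_comm, ← Matrix.mul_assoc, h1, Fintype.sum_prod_type_right]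
      simp only [← Finset.sum_mul, unitary_col_sum P V hP hV]
      simp [trace]
    have htr' : ∑ k : (A × E) × (A × E), Complex.normSq
        (((kroneckerMap (· * ·) (1 : Matrix A A ℂ) F')ᴴ * P') k.1 k.2) * p' k.2 =
          (trace (P' * diagonal (fun i => (p' i : ℂ)) * P'ᴴ)).re := by
      have h1 : P'ᴴ * P' = 1 := mem_unitaryGroup_iff'.1 hP'
      rw [trace_mul_comm, ← Matrix.mul_assoc, h1, Fintype.sum_prod_type_right]
      simp only [← Finset.sum_mul, unitary_col_sum P' _ hP' hV']
      simp [trace]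
    have hfin := ssa_analytic
      (fun k : (A × (B × E)) × (A × (B × E)) => Complex.normSq
        (((kroneckerMap (· * ·) (1 : Matrix A A ℂ) F)ᴴ * P) k.1 k.2))
      (fun k => p k.2) (fun k => r k.1.2 + c)
      (fun k : (A × E) × (A × E) => Complex.normSq
        (((kroneckerMap (· * ·) (1 : Matrix A A ℂ) F')ᴴ * P') k.1 k.2))
      (fun k => p' k.2) (fun k => r' k.1.2 + Fintype.card B * c)
      (fun k => hp _) (fun k => hq _) (fun k => hp' _) (fun k => hq' _)
      (by
        rw [htr P _ p hP hV, htr', ← hρ, ← hρ']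
        congr 1
        simp only [trace, diag_apply, pmid, of_apply, Fintype.sum_prod_type]
        apply Finset.sum_congr rfl
        intro a _
        rw [Finset.sum_comm])
      hm
    rw [rel_eq P _ p (fun x => r x.2 + c) hP hV,
      rel_eq P' _ p' (fun x => r' x.2 + Fintype.card B * c) hP' hV', ← hρ, ← hρ',
      kron_conj_sum F r c hF ρ hR, kron_conj_sum F' r' _ hF' _ hR'] at hfin
    exact hfin
  have := le_of_tendsto_of_tendsto
    ((tendsto_ent r' hr' (Fintype.card B)).const_sub (- (∑ i, Real.negMulLog (p' i))))
    ((tendsto_ent r hr 1).const_sub (- (∑ i, Real.negMulLog (p i))))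
    (by
      filter_upwards [self_mem_nhdsWithin] with c hc
      exact key c hc)
  linarith

end

/-! ### more entropy facts -/

section
open Matrix Polynomial
variable {ι κ A B E : Type*} [Fintype ι] [DecidableEq ι] [Fintype κ] [DecidableEq κ]
  [Fintype A] [DecidableEq A] [Fintype B] [DecidableEq B] [Fintype E] [DecidableEq E]

lemma nEnt_submatrix (M : Matrix κ κ ℂ) (e : ι ≃ κ) : nEnt (M.submatrix e e) = nEnt M := by
  have h := charpoly_reindex e.symm M
  simp only [reindex_apply, Equiv.symm_symm] at h
  rw [nEnt, nEnt, h]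

lemma nEnt_isometry (W : Matrix ι κ ℂ) (hW : Wᴴ * W = 1) (M : Matrix κ κ ℂ) :
    nEnt (W * M * Wᴴ) = nEnt M := by
  have h := charpoly_mul_comm' W (M * Wᴴ)
  rw [Matrix.mul_assoc M, hW, Matrix.mul_one, ← Matrix.mul_assoc] at h
  have h2 := congrArg (fun q : ℂ[X] => (q.roots.map (fun z => Real.negMulLog z.re)).sum) h
  have m1 := charpoly_monic (W * M * Wᴴ)
  have m2 := charpoly_monic M
  rw [roots_mul (mul_ne_zero (pow_ne_zero _ X_ne_zero) m1.ne_zero),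
    roots_mul (mul_ne_zero (pow_ne_zero _ X_ne_zero) m2.ne_zero)] at h2
  simpa [nEnt, Multiset.map_nsmul, Multiset.sum_nsmul] using h2

lemma nEnt_blockDiagonal (M : κ → Matrix ι ι ℂ) :
    nEnt (blockDiagonal M) = ∑ k, nEnt (M k) := by
  have h : (blockDiagonal M).charpoly = ∏ k, (M k).charpoly := by
    unfold charpoly
    rw [← det_blockDiagonal]
    congr 1
    ext ⟨i, k⟩ ⟨j, k'⟩
    by_cases h : k = k'
    · subst h
      by_cases h' : i = j
      · subst h'; simp [charmatrix_apply]
      · simp [charmatrix_apply, h', blockDiagonal_apply]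
    · simp [charmatrix_apply, h, blockDiagonal_apply]
  unfold nEnt
  rw [h, roots_prod _ _ (Finset.prod_ne_zero_iff.2 fun k _ => (charpoly_monic _).ne_zero)]
  simp [Multiset.map_bind, Multiset.sum_bind]

lemma nEnt_smul (M : Matrix ι ι ℂ) (hM : M.IsHermitian) (c : ℝ) :
    nEnt ((c : ℂ) • M) = c * nEnt M + Real.negMulLog c * M.trace.re := by
  obtain ⟨V, hV, h⟩ := herm_exists_diag hM
  set p := hM.eigenvalues
  have h1 : Vᴴ * V = 1 := mem_unitaryGroup_iff'.1 hV
  have e1 : nEnt M = ∑ i, Real.negMulLog (p i) := by rw [h]; exact nEnt_diag V p hV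
  have e2 : nEnt ((c : ℂ) • M) = ∑ i, Real.negMulLog (c * p i) := by
    rw [← nEnt_diag V (fun i => c * p i) hV, h]
    congr 1
    rw [← Matrix.smul_mul, ← Matrix.mul_smul]
    congr 2
    ext i j
    by_cases hij : i = j
    · subst hij; simp
    · simp [hij]
  have e3 : M.trace.re = ∑ i, p i := by
    rw [h, trace_mul_comm, ← Matrix.mul_assoc, h1]
    simp [trace]
  rw [e1, e2, e3, Finset.mul_sum, Finset.mul_sum, ← Finset.sum_add_distrib]
  apply Finset.sum_congr rfl
  intro i _
  rw [Real.negMulLog_mul]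
  ring

/-- marginal on `A E` -/
def mAE (τ : Matrix ((A × B) × E) ((A × B) × E) ℂ) : Matrix (A × E) (A × E) ℂ :=
  Matrix.of fun p q => ∑ b : B, τ ((p.1, b), p.2) ((q.1, b), q.2)

/-- marginal on `B E` -/
def mBE (τ : Matrix ((A × B) × E) ((A × B) × E) ℂ) : Matrix (B × E) (B × E) ℂ :=
  Matrix.of fun p q => ∑ a : A, τ ((a, p.1), p.2) ((a, q.1), q.2)

lemma ssa_nats' [Nonempty B] {τ : Matrix ((A × B) × E) ((A × B) × E) ℂ} (h : τ.PosSemidef) :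
    nEnt τ + nEnt (pfst τ) ≤ nEnt (mAE τ) + nEnt (mBE τ) := by
  have h1 := ssa_nats (h.submatrix (Equiv.prodAssoc A B E).symm)
  rw [nEnt_submatrix] at h1
  have e1 : pmid (τ.submatrix (Equiv.prodAssoc A B E).symm (Equiv.prodAssoc A B E).symm)
    = mAE τ := rfl
  have e2 : pfst (τ.submatrix (Equiv.prodAssoc A B E).symm (Equiv.prodAssoc A B E).symm)
    = mBE τ := rfl
  have e3 : pfst (mAE τ) = pfst τ := by
    ext e e'
    simp only [pfst, mAE, of_apply, Fintype.sum_prod_type]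
  rw [e1, e2, e3] at h1
  exact h1

lemma mAE_psd {ρ : Matrix ((A × B) × E) ((A × B) × E) ℂ} (h : ρ.PosSemidef) :
    (mAE ρ).PosSemidef := by
  have : mAE ρ = ∑ b : B, ρ.submatrix (fun x : A × E => ((x.1, b), x.2))
      (fun x => ((x.1, b), x.2)) := by
    ext k k'
    simp [mAE, Matrix.sum_apply]
  rw [this]
  exact posSemidef_sum _ fun a _ => h.submatrix _

lemma mBE_psd {ρ : Matrix ((A × B) × E) ((A × B) × E) ℂ} (h : ρ.PosSemidef) :
    (mBE ρ).PosSemidef := by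
  have : mBE ρ = ∑ a : A, ρ.submatrix (fun x : B × E => ((a, x.1), x.2))
      (fun x => ((a, x.1), x.2)) := by
    ext k k'
    simp [mBE, Matrix.sum_apply]
  rw [this]
  exact posSemidef_sum _ fun a _ => h.submatrix _

lemma mAE_trace (ρ : Matrix ((A × B) × E) ((A × B) × E) ℂ) : (mAE ρ).trace = ρ.trace := by
  simp only [trace, diag_apply, mAE, of_apply, Fintype.sum_prod_type]
  apply Finset.sum_congr rfl
  intro a _
  rw [Finset.sum_comm]

lemma mBE_trace (ρ : Matrix ((A × B) × E) ((A × B) × E) ℂ) : (mBE ρ).trace = ρ.trace := by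
  simp only [trace, diag_apply, mBE, of_apply, Fintype.sum_prod_type]
  symm
  rw [Finset.sum_comm]
  apply Finset.sum_congr rfl
  intro b _
  rw [Finset.sum_comm]

lemma condMutInfo_eq {ρ : Matrix ((A × B) × E) ((A × B) × E) ℂ} (h : ρ.PosSemidef) :
    condMutInfo ρ = (nEnt (mAE ρ) + nEnt (mBE ρ) - nEnt ρ - nEnt (pfst ρ)) / Real.log 2 := by
  have e : (Matrix.of fun e e' : E => ∑ a : A, ∑ b : B, ρ ((a, b), e) ((a, b), e')) = pfst ρ := by
    ext e e'
    simp only [pfst, of_apply, Fintype.sum_prod_type]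
  unfold condMutInfo
  rw [e]
  change vnEntropy (mAE ρ) + vnEntropy (mBE ρ) - vnEntropy ρ - vnEntropy (pfst ρ) = _
  rw [vnEntropy_eq h.1, vnEntropy_eq (mAE_psd h).1, vnEntropy_eq (mBE_psd h).1,
    vnEntropy_eq (pfst_psd h).1]
  ring

lemma kron_isometry (W : Matrix ι κ ℂ) (hW : Wᴴ * W = 1) :
    (kroneckerMap (· * ·) W (1 : Matrix E E ℂ))ᴴ * kroneckerMap (· * ·) W (1 : Matrix E E ℂ)
      = 1 := by
  rw [conjTranspose_kronecker, ← mul_kronecker_mul, hW]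
  simp

lemma pfst_isometry (W : Matrix ι κ ℂ) (hW : Wᴴ * W = 1) (τ : Matrix (κ × E) (κ × E) ℂ) :
    pfst (kroneckerMap (· * ·) W (1 : Matrix E E ℂ) * τ *
      (kroneckerMap (· * ·) W (1 : Matrix E E ℂ))ᴴ) = pfst τ := by
  ext e e'
  set T : Matrix κ κ ℂ := Matrix.of fun z z' => τ (z, e) (z', e') with hT
  have h1 : ∀ x : ι, (kroneckerMap (· * ·) W (1 : Matrix E E ℂ) * τ *
      (kroneckerMap (· * ·) W (1 : Matrix E E ℂ))ᴴ) (x, e) (x, e') = (W * T * Wᴴ) x x := by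
    intro x
    rw [conjTranspose_kronecker]
    simp only [mul_apply, Fintype.sum_prod_type, kroneckerMap_apply, conjTranspose_one, one_apply,
      hT, of_apply, ite_mul, mul_ite, mul_one, zero_mul, mul_zero, Finset.sum_ite_irrel,
      Finset.sum_const_zero, Finset.sum_ite_eq, Finset.sum_ite_eq', Finset.mem_univ, if_true]
  have h2 : trace (W * T * Wᴴ) = trace T := by
    rw [trace_mul_comm, ← Matrix.mul_assoc, hW, Matrix.one_mul]
  simp only [pfst, of_apply, h1]
  exact h2

lemma trace_kron_ptrace (Z : Matrix ι ι ℂ) (ρ : Matrix (ι × E) (ι × E) ℂ) :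
    trace (kroneckerMap (· * ·) Z (1 : Matrix E E ℂ) * ρ) = trace (Z * ptraceSnd ρ) := by
  simp only [trace, diag_apply, mul_apply, Fintype.sum_prod_type, kroneckerMap_apply, one_apply,
    ptraceSnd, of_apply, ite_mul, mul_ite, mul_one, zero_mul, mul_zero, Finset.sum_ite_irrel,
    Finset.sum_const_zero, Finset.sum_ite_eq, Finset.sum_ite_eq', Finset.mem_univ, if_true,
    Finset.mul_sum]
  apply Finset.sum_congr rfl
  intro a _
  rw [Finset.sum_comm]

open scoped MatrixOrder in
lemma psd_factor {ρ : Matrix ι ι ℂ} (hρ : ρ.PosSemidef) : ∃ C, ρ = Cᴴ * C :=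
  CStarAlgebra.nonneg_iff_eq_star_mul_self.mp hρ.nonneg

lemma extension_form (W : Matrix ι κ ℂ) (hW : Wᴴ * W = 1) (σ : Matrix κ κ ℂ)
    {ρ : Matrix (ι × E) (ι × E) ℂ} (hρ : ρ.PosSemidef) (h : ptraceSnd ρ = W * σ * Wᴴ) :
    ∃ τ : Matrix (κ × E) (κ × E) ℂ, τ.PosSemidef ∧
      ρ = kroneckerMap (· * ·) W (1 : Matrix E E ℂ) * τ *
        (kroneckerMap (· * ·) W (1 : Matrix E E ℂ))ᴴ := by
  set Q := kroneckerMap (· * ·) W (1 : Matrix E E ℂ) with hQ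
  refine ⟨Qᴴ * ρ * Q, hρ.conjTranspose_mul_mul_same Q, ?_⟩
  set D := kroneckerMap (· * ·) (1 - W * Wᴴ) (1 : Matrix E E ℂ) with hD
  have hDQ : D = 1 - Q * Qᴴ := by
    rw [hD, hQ, conjTranspose_kronecker, ← mul_kronecker_mul]
    ext ⟨a, e⟩ ⟨a', e'⟩
    simp only [kroneckerMap_apply, Matrix.sub_apply, one_apply, Prod.mk.injEq]
    by_cases h : a = a' <;> by_cases h' : e = e' <;> simp [h, h', one_apply]
  have hDH : Dᴴ = D := by
    rw [hDQ]; simp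
  have h0 : (1 - W * Wᴴ) * W = 0 := by
    rw [Matrix.sub_mul, Matrix.mul_assoc, hW]; simp
  have htr : trace (D * ρ * Dᴴ) = 0 := by
    rw [trace_mul_comm, hDH, ← Matrix.mul_assoc, hD, ← mul_kronecker_mul, Matrix.one_mul,
      trace_kron_ptrace, h]
    have : (1 - W * Wᴴ) * (1 - W * Wᴴ) * (W * σ * Wᴴ) =
      (1 - W * Wᴴ) * (((1 - W * Wᴴ) * W) * (σ * Wᴴ)) := by simp only [Matrix.mul_assoc]
    rw [this, h0]; simp
  have hz : D * ρ * Dᴴ = 0 := (hρ.mul_mul_conjTranspose_same D).trace_eq_zero_iff.1 htr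
  obtain ⟨C, hC⟩ : ∃ C, ρ = Cᴴ * C := psd_factor hρ
  have hCD : C * Dᴴ = 0 := by
    rw [← conjTranspose_mul_self_eq_zero, conjTranspose_mul, conjTranspose_conjTranspose, ← hz, hC]
    simp only [Matrix.mul_assoc]
  have h1 : ρ * D = 0 := by
    rw [hC, Matrix.mul_assoc, ← hDH, hCD, Matrix.mul_zero]
  have h2 : D * ρ = 0 := by
    have := congrArg conjTranspose h1
    rwa [conjTranspose_mul, hDH, hρ.1, conjTranspose_zero] at this
  rw [hDQ] at h1 h2
  have h1' : ρ * (Q * Qᴴ) = ρ := by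
    rw [Matrix.mul_sub, Matrix.mul_one, sub_eq_zero] at h1; exact h1.symm
  have h2' : (Q * Qᴴ) * ρ = ρ := by
    rw [Matrix.sub_mul, Matrix.one_mul, sub_eq_zero] at h2; exact h2.symm
  have : Q * (Qᴴ * ρ * Q) * Qᴴ = (Q * Qᴴ) * (ρ * (Q * Qᴴ)) := by simp only [Matrix.mul_assoc]
  rw [this, h1', h2']

end

/-! ### the key state -/

section
open Matrix
variable {A B E : Type*}
  [Fintype A] [DecidableEq A] [Fintype B] [DecidableEq B] [Fintype E] [DecidableEq E]

/-- The isometry `2^{-m/2} ∑ᵢ |ii⟩ ⊗ Uᵢ`. -/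
def keyW (m : ℕ) (U : Fin (2 ^ m) → Matrix (A × B) (A × B) ℂ) :
    Matrix ((Fin (2 ^ m) × A) × (Fin (2 ^ m) × B)) (A × B) ℂ :=
  Matrix.of fun x y => if x.1.1 = x.2.1 then
    (((Real.sqrt (2 ^ m))⁻¹ : ℝ) : ℂ) * U x.1.1 (x.1.2, x.2.2) y else 0

lemma key_c (m : ℕ) : (((Real.sqrt (2 ^ m))⁻¹ : ℝ) : ℂ) * (((Real.sqrt (2 ^ m))⁻¹ : ℝ) : ℂ)
    = 1 / 2 ^ m := by
  rw [← Complex.ofReal_mul, ← mul_inv, Real.mul_self_sqrt (by positivity)]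
  simp

lemma keyW_isometry (m : ℕ) (U : Fin (2 ^ m) → Matrix (A × B) (A × B) ℂ)
    (hU : ∀ i, U i ∈ unitaryGroup (A × B) ℂ) : (keyW m U)ᴴ * keyW m U = 1 := by
  have h : (keyW m U)ᴴ * keyW m U = ∑ i, (1 / 2 ^ m : ℂ) • ((U i)ᴴ * U i) := by
    ext y z
    rw [← key_c]
    generalize hc : (((Real.sqrt (2 ^ m))⁻¹ : ℝ)) = c
    simp only [mul_apply, conjTranspose_apply, keyW, of_apply, Fintype.sum_prod_type,
      Matrix.sum_apply, Matrix.smul_apply, smul_eq_mul, Finset.mul_sum, hc]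
    apply Finset.sum_congr rfl
    intro i _
    apply Finset.sum_congr rfl
    intro a _
    rw [Finset.sum_comm]
    apply Finset.sum_congr rfl
    intro b _
    rw [Finset.sum_eq_single i]
    · simp; ring
    · intro j _ hj; simp [Ne.symm hj]
    · simp
  rw [h]
  have h2 : ∀ i, (U i)ᴴ * U i = 1 := fun i => mem_unitaryGroup_iff'.1 (hU i)
  simp only [h2, Finset.sum_const, Finset.card_univ, Fintype.card_fin]
  rw [← Nat.cast_smul_eq_nsmul ℂ, smul_smul]
  simp

lemma keyState_eq (m : ℕ) (U : Fin (2 ^ m) → Matrix (A × B) (A × B) ℂ)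
    (σ : Matrix (A × B) (A × B) ℂ) :
    (keyU m U * phiSigma m σ * (keyU m U).conjTranspose).submatrix
      (Equiv.prodProdProdComm (Fin (2 ^ m)) A (Fin (2 ^ m)) B)
      (Equiv.prodProdProdComm (Fin (2 ^ m)) A (Fin (2 ^ m)) B) = keyW m U * σ * (keyW m U)ᴴ := by
  have hl : ∀ (i j : Fin (2 ^ m)) (x : A × B) (q : (Fin (2 ^ m) × Fin (2 ^ m)) × (A × B)),
      (keyU m U * phiSigma m σ) ((i, j), x) q =
      if i = j ∧ q.1.1 = q.1.2 then (1 / 2 ^ m : ℂ) * (U i * σ) x q.2 else 0 := by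
    intro i j x q
    rw [mul_apply, Fintype.sum_prod_type, Finset.sum_eq_single (i, j)]
    · by_cases h : i = j
      · subst h
        by_cases h' : q.1.1 = q.1.2
        · simp only [keyU, phiSigma, of_apply, h', mul_apply, Finset.mul_sum, and_self, if_true]
          apply Finset.sum_congr rfl
          intro z _
          ring
        · simp [keyU, phiSigma, h']
      · simp [keyU, h]
    · rintro ⟨k, l⟩ _ hkl
      apply Finset.sum_eq_zero
      intro z _
      have : ¬ (i = j ∧ k = l ∧ i = k ∧ j = l) := by
        rintro ⟨_, _, rfl, rfl⟩; exact hkl rfl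
      simp only [keyU, of_apply, if_neg this, zero_mul]
    · simp
  ext ⟨⟨i, a⟩, ⟨j, b⟩⟩ ⟨⟨i', a'⟩, ⟨j', b'⟩⟩
  have lhs : (keyU m U * phiSigma m σ * (keyU m U).conjTranspose) ((i, j), (a, b))
      ((i', j'), (a', b')) = if i = j ∧ i' = j' then
        (1 / 2 ^ m : ℂ) * (U i * σ * (U i')ᴴ) (a, b) (a', b') else 0 := by
    rw [mul_apply, Fintype.sum_prod_type, Finset.sum_eq_single (i', j')]
    · simp only [hl]
      by_cases h : i = j
      · by_cases h' : i' = j'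
        · subst h'
          simp only [h, keyU, conjTranspose_apply, of_apply, and_self, if_true,
            mul_apply (M := U j * σ), Finset.mul_sum]
          apply Finset.sum_congr rfl
          intro z _
          ring
        · simp [h']
      · simp [h]
    · rintro ⟨k, l⟩ _ hkl
      apply Finset.sum_eq_zero
      intro z _
      have : ¬ (i' = j' ∧ k = l ∧ i' = k ∧ j' = l) := by
        rintro ⟨_, _, rfl, rfl⟩; exact hkl rfl
      simp only [conjTranspose_apply, keyU, of_apply, if_neg this, star_zero, mul_zero]
    · simp
  refine Eq.trans lhs ?_
  rw [← key_c]
  generalize hc : (((Real.sqrt (2 ^ m))⁻¹ : ℝ)) = c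
  simp only [mul_apply, conjTranspose_apply, keyW, of_apply, hc]
  by_cases h : i = j
  · by_cases h' : i' = j'
    · simp only [h, h', and_self, if_true, Finset.mul_sum, Finset.sum_mul]
      apply Finset.sum_congr rfl
      intro z _
      apply Finset.sum_congr rfl
      intro w _
      simp
      ring
    · simp [h']
  · simp [h]

lemma rho_entry (m : ℕ) (U : Fin (2 ^ m) → Matrix (A × B) (A × B) ℂ)
    (τ : Matrix ((A × B) × E) ((A × B) × E) ℂ) (i j i' j' : Fin (2 ^ m)) (a a' : A) (b b' : B)
    (e e' : E) :
    (kroneckerMap (· * ·) (keyW m U) (1 : Matrix E E ℂ) * τ *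
      (kroneckerMap (· * ·) (keyW m U) (1 : Matrix E E ℂ))ᴴ)
      (((i, a), (j, b)), e) (((i', a'), (j', b')), e') =
    if i = j ∧ i' = j' then (((2 ^ m)⁻¹ : ℝ) : ℂ) *
      (kroneckerMap (· * ·) (U i) (1 : Matrix E E ℂ) * τ *
      (kroneckerMap (· * ·) (U i') (1 : Matrix E E ℂ))ᴴ) ((a, b), e) ((a', b'), e') else 0 := by
  have hw : ∀ (i j : Fin (2 ^ m)) (a : A) (b : B) (e : E) (z : (A × B) × E),
      kroneckerMap (· * ·) (keyW m U) (1 : Matrix E E ℂ) (((i, a), (j, b)), e) z =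
      if i = j then (((Real.sqrt (2 ^ m))⁻¹ : ℝ) : ℂ) *
        kroneckerMap (· * ·) (U i) (1 : Matrix E E ℂ) ((a, b), e) z else 0 := by
    intro i j a b e z
    by_cases h : i = j
    · simp only [kroneckerMap_apply, keyW, of_apply, h, if_true, mul_assoc]
    · simp [keyW, h]
  have hc' : (((2 ^ m)⁻¹ : ℝ) : ℂ) = 1 / 2 ^ m := by simp
  rw [hc', ← key_c]
  generalize hc : (((Real.sqrt (2 ^ m))⁻¹ : ℝ)) = c at hw ⊢
  generalize kroneckerMap (· * ·) (keyW m U) (1 : Matrix E E ℂ) = Q at hw ⊢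
  simp only [mul_apply, conjTranspose_apply, hw]
  by_cases h : i = j
  · by_cases h' : i' = j'
    · simp only [h, h', and_self, if_true, Finset.mul_sum, Finset.sum_mul]
      apply Finset.sum_congr rfl
      intro z _
      apply Finset.sum_congr rfl
      intro w _
      rw [star_mul', Complex.star_def, Complex.conj_ofReal]
      ring
    · simp [h']
  · simp [h]

/-- Rearrangement of indices. -/
def shuffle (I A E : Type*) : (I × A) × E ≃ (A × E) × I where
  toFun x := ((x.1.2, x.2), x.1.1)
  invFun y := ((y.2, y.1.1), y.1.2)
  left_inv _ := rfl
  right_inv _ := rfl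

theorem key_cmi (m : ℕ) [Nonempty B] (U : Fin (2 ^ m) → Matrix (A × B) (A × B) ℂ)
    (hU : ∀ i, U i ∈ unitaryGroup (A × B) ℂ)
    (τ : Matrix ((A × B) × E) ((A × B) × E) ℂ) (hτ : τ.PosSemidef)
    {ρ : Matrix (((Fin (2 ^ m) × A) × (Fin (2 ^ m) × B)) × E)
      (((Fin (2 ^ m) × A) × (Fin (2 ^ m) × B)) × E) ℂ}
    (hρ : ρ.PosSemidef) (htr : ρ.trace = 1)
    (h : ρ = kroneckerMap (· * ·) (keyW m U) (1 : Matrix E E ℂ) * τ *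
        (kroneckerMap (· * ·) (keyW m U) (1 : Matrix E E ℂ))ᴴ) :
    (m : ℝ) ≤ 1 / 2 * condMutInfo ρ := by
  have hW := keyW_isometry m U hU
  have hQ := kron_isometry (E := E) _ hW
  set T : Fin (2 ^ m) → Matrix ((A × B) × E) ((A × B) × E) ℂ := fun i =>
    kroneckerMap (· * ·) (U i) (1 : Matrix E E ℂ) * τ *
      (kroneckerMap (· * ·) (U i) (1 : Matrix E E ℂ))ᴴ with hT
  have hUi : ∀ i, (U i)ᴴ * U i = 1 := fun i => mem_unitaryGroup_iff'.1 (hU i)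
  have hTpsd : ∀ i, (T i).PosSemidef := fun i => hτ.mul_mul_conjTranspose_same _
  have hTn : ∀ i, nEnt (T i) = nEnt τ := fun i => nEnt_isometry _ (kron_isometry _ (hUi i)) _
  have hTE : ∀ i, pfst (T i) = pfst τ := fun i => pfst_isometry _ (hUi i) _
  have hτtr : τ.trace = 1 := by
    rw [← htr, h, trace_mul_comm, ← Matrix.mul_assoc, hQ, Matrix.one_mul]
  have hTtr : ∀ i, (T i).trace = 1 := by
    intro i
    simp only [hT]
    rw [← hτtr, trace_mul_comm, ← Matrix.mul_assoc, kron_isometry _ (hUi i), Matrix.one_mul]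
  have n1 : nEnt ρ = nEnt τ := by rw [h]; exact nEnt_isometry _ hQ _
  have n2 : pfst ρ = pfst τ := by rw [h]; exact pfst_isometry _ hW _
  set c : ℝ := (2 ^ m)⁻¹ with hc
  have mA : mAE ρ = (blockDiagonal fun i => (c : ℂ) • mAE (T i)).submatrix
      (shuffle (Fin (2 ^ m)) A E) (shuffle (Fin (2 ^ m)) A E) := by
    ext ⟨⟨i, a⟩, e⟩ ⟨⟨i', a'⟩, e'⟩
    rw [h]
    simp only [mAE, of_apply, rho_entry, submatrix_apply, shuffle, Equiv.coe_fn_mk,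
      blockDiagonal_apply, Fintype.sum_prod_type, Matrix.smul_apply, smul_eq_mul]
    rw [Finset.sum_eq_single i]
    · by_cases hi : i = i'
      · subst hi
        simp [hT, hc, Finset.mul_sum]
      · simp [hi, Ne.symm hi]
    · intro j _ hj
      simp [Ne.symm hj]
    · simp
  have mB : mBE ρ = (blockDiagonal fun i => (c : ℂ) • mBE (T i)).submatrix
      (shuffle (Fin (2 ^ m)) B E) (shuffle (Fin (2 ^ m)) B E) := by
    ext ⟨⟨i, a⟩, e⟩ ⟨⟨i', a'⟩, e'⟩
    rw [h]
    simp only [mBE, of_apply, rho_entry, submatrix_apply, shuffle, Equiv.coe_fn_mk,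
      blockDiagonal_apply, Fintype.sum_prod_type, Matrix.smul_apply, smul_eq_mul]
    rw [Finset.sum_eq_single i]
    · by_cases hi : i = i'
      · subst hi
        simp [hT, hc, Finset.mul_sum]
      · simp [hi]
    · intro j _ hj
      simp [hj]
    · simp
  have hcN : (2 ^ m : ℝ) * c = 1 := by rw [hc]; field_simp
  have hneg : (2 ^ m : ℝ) * Real.negMulLog c = m * Real.log 2 := by
    rw [Real.negMulLog, hc, Real.log_inv, Real.log_pow]
    field_simp
  have n3 : nEnt (mAE ρ) = c * (∑ i, nEnt (mAE (T i))) + m * Real.log 2 := by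
    rw [mA, nEnt_submatrix, nEnt_blockDiagonal]
    simp only [nEnt_smul _ (mAE_psd (hTpsd _)).1, mAE_trace, hTtr]
    rw [Finset.sum_add_distrib, ← Finset.mul_sum, ← hneg]
    simp
  have n4 : nEnt (mBE ρ) = c * (∑ i, nEnt (mBE (T i))) + m * Real.log 2 := by
    rw [mB, nEnt_submatrix, nEnt_blockDiagonal]
    simp only [nEnt_smul _ (mBE_psd (hTpsd _)).1, mBE_trace, hTtr]
    rw [Finset.sum_add_distrib, ← Finset.mul_sum, ← hneg]
    simp
  have hs : ∑ i : Fin (2 ^ m), (nEnt τ + nEnt (pfst τ)) ≤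
      ∑ i, (nEnt (mAE (T i)) + nEnt (mBE (T i))) := by
    apply Finset.sum_le_sum
    intro i _
    rw [← hTn i, ← hTE i]
    exact ssa_nats' (hTpsd i)
  rw [Finset.sum_const, Finset.card_univ, Fintype.card_fin,
    nsmul_eq_mul] at hs
  have hcpos : 0 < c := by rw [hc]; positivity
  have hs2 := mul_le_mul_of_nonneg_left hs hcpos.le
  push_cast at hs2
  have hs3 : nEnt τ + nEnt (pfst τ) ≤
      c * (∑ i, nEnt (mAE (T i))) + c * (∑ i, nEnt (mBE (T i))) := by
    calc nEnt τ + nEnt (pfst τ) = ((2 ^ m : ℝ) * c) * (nEnt τ + nEnt (pfst τ)) := by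
          rw [hcN, one_mul]
      _ = c * (2 ^ m * (nEnt τ + nEnt (pfst τ))) := by ring
      _ ≤ _ := hs2
      _ = _ := by rw [Finset.sum_add_distrib, mul_add]
  have hl : 0 < Real.log 2 := Real.log_pos (by norm_num)
  rw [condMutInfo_eq hρ, n1, n2, n3, n4, ← mul_div_assoc, le_div_iff₀ hl]
  linarith

end

/-- the key state `γ = U (|Φ⟩⟨Φ| ⊗ σ) U†`, viewed as bipartite with
respect to `AA' : BB'`, has squashed entanglement at least `m`. -/
theorem Esq_key_state_ge (m : ℕ) (hm : 1 ≤ m) (α' β' : Type*)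
    [Fintype α'] [DecidableEq α'] [Fintype β'] [DecidableEq β']
    (σ : Matrix (α' × β') (α' × β') ℂ) (hσ : σ.PosSemidef) (hσtr : σ.trace = 1)
    (U : Fin (2 ^ m) → Matrix (α' × β') (α' × β') ℂ)
    (hU : ∀ i, U i ∈ Matrix.unitaryGroup (α' × β') ℂ) :
    (m : ℝ) ≤ Esq ((keyU m U * phiSigma m σ * (keyU m U).conjTranspose).submatrix
      (Equiv.prodProdProdComm (Fin (2 ^ m)) α' (Fin (2 ^ m)) β')
      (Equiv.prodProdProdComm (Fin (2 ^ m)) α' (Fin (2 ^ m)) β')) := by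
  have hne : Nonempty (α' × β') := by
    by_contra hcon
    rw [not_nonempty_iff] at hcon
    simp [Matrix.trace] at hσtr
  haveI : Nonempty β' := hne.map Prod.snd
  rw [keyState_eq]
  have hW := keyW_isometry m U hU
  apply le_csInf
  · refine ⟨_, 1, (keyW m U * σ * (keyW m U).conjTranspose).submatrix Prod.fst Prod.fst,
      (hσ.mul_mul_conjTranspose_same _).submatrix _, ?_, ?_, rfl⟩
    · have h1 : (keyW m U * σ * (keyW m U).conjTranspose).trace = 1 := by
        rw [Matrix.trace_mul_comm, ← Matrix.mul_assoc, hW, Matrix.one_mul, hσtr]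
      rw [← h1]
      simp [Matrix.trace, Fintype.sum_prod_type]
    · ext x y
      simp [ptraceSnd]
  · rintro x ⟨k, ρ, hρ, htr, hpt, rfl⟩
    obtain ⟨τ, hτ, hform⟩ := extension_form (keyW m U) hW σ hρ hpt
    exact key_cmi m U hU τ hτ hρ htr hform

end
end

section
/- For all integers d ≥ 2 and n ≥ 1 and every unit vector ψ in the range of (P_2^{(d)})^{⊗n} ⊆ (ℂ^d ⊗ ℂ^d)^{⊗n}, the reduced density operator ψ_{A^n} := tr_{B^n} |ψ⟩⟨ψ| obtained by tracing out the n second tensor factors satisfies ‖ψ_{A^n}‖_∞ ≤ (3/4)^{n/2}, where ‖·‖_∞ denotes the operator norm. -/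
open scoped BigOperators
open Classical
open scoped ComplexOrder

noncomputable section

section helpers
open Matrix
open scoped Matrix.Norms.L2Operator

abbrev QX (d : ℕ) := (Fin d × Fin d) × (Fin d × Fin d)

def Uperm {X : Type*} [DecidableEq X] (e : X → X) : Matrix X X ℂ :=
  Matrix.of fun p q => if q = e p then 1 else 0

lemma Uperm_mulVec {X : Type*} [Fintype X] [DecidableEq X] (e : X → X) (v : X → ℂ) (p : X) :
    (Uperm e *ᵥ v) p = v (e p) := by
  simp [Uperm, Matrix.mulVec, dotProduct]

def sS {d : ℕ} (p : QX d) : QX d := ((p.1.2, p.1.1), p.2)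
def sT {d : ℕ} (p : QX d) : QX d := (p.1, (p.2.2, p.2.1))
def sST {d : ℕ} (p : QX d) : QX d := ((p.1.2, p.1.1), (p.2.2, p.2.1))
def sF {d : ℕ} (p : QX d) : QX d := ((p.2.1, p.1.2), (p.1.1, p.2.2))
def sW {d : ℕ} (p : QX d) : QX d := (p.2, p.1)

lemma Uperm_herm {X : Type*} [Fintype X] [DecidableEq X] (e : X → X) (he : ∀ x, e (e x) = x) :
    (Uperm e)ᴴ = Uperm e := by
  ext p q
  simp only [Uperm, conjTranspose_apply, of_apply]
  have : p = e q ↔ q = e p := ⟨fun h => by rw [h, he], fun h => by rw [h, he]⟩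
  simp [this, apply_ite]

lemma mat_ext {X : Type*} [Fintype X] [DecidableEq X] (A B : Matrix X X ℂ)
    (h : ∀ v p, (A *ᵥ v) p = (B *ᵥ v) p) : A = B :=
  Matrix.toLin'.injective (LinearMap.ext fun v => funext fun p => by simpa using h v p)

def RR (d : ℕ) : Matrix (QX d) (QX d) ℂ :=
  (1/4 : ℂ) • (1 - Uperm sS - Uperm sT + Uperm sST)

def kk (d : ℕ) : Matrix (QX d) (QX d) ℂ := (1/4 : ℂ) • 1 + Uperm sF

lemma RR_apply {d : ℕ} (p q : QX d) : RR d p q = asymProj d p.1 q.1 * asymProj d p.2 q.2 := by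
  obtain ⟨⟨a, b⟩, ⟨c, e⟩⟩ := p
  obtain ⟨⟨a', b'⟩, ⟨c', e'⟩⟩ := q
  simp only [RR, asymProj, Uperm, sS, sT, sST, Matrix.smul_apply, Matrix.add_apply,
    Matrix.sub_apply, Matrix.one_apply, of_apply, Prod.mk.injEq, smul_eq_mul]
  have h1 : (a = a' ∧ b = b') = (a' = a ∧ b' = b) := by simp [eq_comm]
  have h2 : (a = b' ∧ b = a') = (a' = b ∧ b' = a) := by
    simp only [eq_comm (a := a), eq_comm (a := b), and_comm]
  have h3 : (c = c' ∧ e = e') = (c' = c ∧ e' = e) := by simp [eq_comm]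
  have h4 : (c = e' ∧ e = c') = (c' = e ∧ e' = c) := by
    simp only [eq_comm (a := c), eq_comm (a := e), and_comm]
  simp only [h1, h2, h3, h4]
  have hi : ∀ (P Q : Prop) [Decidable P] [Decidable Q],
      (if P ∧ Q then (1 : ℂ) else 0) = (if P then 1 else 0) * (if Q then 1 else 0) := by
    intro P Q _ _
    by_cases P <;> by_cases Q <;> simp_all
  simp only [hi]
  ring

lemma RR_mulVec {d : ℕ} (v : QX d → ℂ) (p : QX d) :
    (RR d *ᵥ v) p = 1/4 * (v p - v (sS p) - v (sT p) + v (sST p)) := by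
  simp [RR, Matrix.smul_mulVec, Matrix.add_mulVec, Matrix.sub_mulVec, Uperm_mulVec]
  ring

lemma kk_mulVec {d : ℕ} (v : QX d → ℂ) (p : QX d) :
    (kk d *ᵥ v) p = 1/4 * v p + v (sF p) := by
  simp [kk, Matrix.smul_mulVec, Matrix.add_mulVec, Uperm_mulVec]

lemma RR_herm (d : ℕ) : (RR d)ᴴ = RR d := by
  simp [RR, conjTranspose_smul, Uperm_herm sS (fun _ => rfl), Uperm_herm sT (fun _ => rfl),
    Uperm_herm sST (fun _ => rfl)]

lemma kk_herm (d : ℕ) : (kk d)ᴴ = kk d := by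
  simp [kk, conjTranspose_smul, Uperm_herm sF (fun _ => rfl)]

lemma RR_sq (d : ℕ) : RR d * RR d = RR d := by
  apply mat_ext
  rintro v ⟨⟨a, b⟩, ⟨c, e⟩⟩
  simp only [← mulVec_mulVec, RR_mulVec, sS, sT, sST]
  ring

lemma W_sq (d : ℕ) : Uperm (sW (d := d)) * Uperm sW = 1 := by
  apply mat_ext
  rintro v ⟨⟨a, b⟩, ⟨c, e⟩⟩
  simp only [← mulVec_mulVec, Uperm_mulVec, sW, one_mulVec]

lemma key_id (d : ℕ) : RR d * kk d * RR d * kk d * RR d =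
    (5/16 : ℂ) • RR d + (1/4 : ℂ) • (Uperm sW * RR d) := by
  apply mat_ext
  rintro v ⟨⟨a, b⟩, ⟨c, e⟩⟩
  simp only [← mulVec_mulVec, RR_mulVec, kk_mulVec, Uperm_mulVec, add_mulVec, smul_mulVec,
    Pi.add_apply, Pi.smul_apply, smul_eq_mul, sS, sT, sST, sF, sW]
  ring

def KK (d : ℕ) : Matrix (QX d) (QX d) ℂ := RR d * kk d * RR d

lemma RR_norm (d : ℕ) : ‖RR d‖ ≤ 1 := by
  have h := l2_opNorm_conjTranspose_mul_self (RR d)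
  rw [RR_herm, RR_sq] at h
  by_contra! hc
  nlinarith

lemma W_norm (d : ℕ) : ‖Uperm (sW (d := d))‖ ≤ 1 := by
  have h := l2_opNorm_conjTranspose_mul_self (Uperm (sW (d := d)))
  rw [Uperm_herm sW (fun _ => rfl), W_sq] at h
  have h1 : ‖(1 : Matrix (QX d) (QX d) ℂ)‖ ≤ 1 := by
    have h := l2_opNorm_conjTranspose_mul_self (1 : Matrix (QX d) (QX d) ℂ)
    rw [conjTranspose_one, one_mul] at h
    by_contra! hc
    nlinarith
  by_contra! hc
  nlinarith

lemma KK_norm (d : ℕ) : ‖KK d‖ ≤ 3/4 := by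
  have h := l2_opNorm_conjTranspose_mul_self (KK d)
  have h2 : (KK d)ᴴ * KK d = (5/16 : ℂ) • RR d + (1/4 : ℂ) • (Uperm sW * RR d) := by
    rw [← key_id]
    simp only [KK, conjTranspose_mul, RR_herm, kk_herm]
    have : RR d * (kk d * RR d) * (RR d * kk d * RR d) =
      RR d * kk d * (RR d * RR d) * kk d * RR d := by simp only [mul_assoc]
    rw [this, RR_sq]
  rw [h2] at h
  have h3 : ‖(5/16 : ℂ) • RR d + (1/4 : ℂ) • (Uperm sW * RR d)‖ ≤ 9/16 := by
    refine (norm_add_le _ _).trans ?_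
    rw [norm_smul, norm_smul]
    have h4 := l2_opNorm_mul (Uperm (sW (d := d))) (RR d)
    have h5 := RR_norm d
    have h6 := W_norm d
    have h7 : ‖Uperm (sW (d := d)) * RR d‖ ≤ 1 :=
      h4.trans (mul_le_one₀ h6 (norm_nonneg _) h5)
    norm_num
    linarith
  nlinarith [norm_nonneg (KK d)]

lemma KK_sum (d : ℕ) (v : QX d → ℂ) :
    ∑ p, ‖∑ q, KK d p q * v q‖^2 ≤ (9/16 : ℝ) * ∑ p, ‖v p‖^2 := by
  have h := l2_opNorm_mulVec (KK d) (WithLp.toLp 2 v)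
  have h2 := pow_le_pow_left₀ (norm_nonneg _) (h.trans
    (mul_le_mul_of_nonneg_right (KK_norm d) (norm_nonneg _))) 2
  rw [mul_pow, EuclideanSpace.norm_sq_eq, EuclideanSpace.norm_sq_eq] at h2
  norm_num [mulVec, dotProduct] at h2
  exact h2

def tp {X : Type*} (n : ℕ) (M : Matrix X X ℂ) : Matrix (Fin n → X) (Fin n → X) ℂ :=
  Matrix.of fun f g => ∏ i, M (f i) (g i)

lemma tp_mul {X : Type*} [Fintype X] (n : ℕ) (M N : Matrix X X ℂ) :
    tp n M * tp n N = tp n (M * N) := by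
  ext f g
  simp only [tp, Matrix.mul_apply, of_apply, ← Finset.prod_mul_distrib]
  rw [Finset.prod_univ_sum]
  simp

lemma tp_bound {X : Type*} [Fintype X] (M : Matrix X X ℂ) (c : ℝ) (hc : 0 ≤ c)
    (hM : ∀ v : X → ℂ, ∑ p, ‖∑ q, M p q * v q‖^2 ≤ c * ∑ p, ‖v p‖^2) (n : ℕ) :
    ∀ Φ : (Fin n → X) → ℂ, ∑ f, ‖∑ g, tp n M f g * Φ g‖^2 ≤ c^n * ∑ f, ‖Φ f‖^2 := by
  induction n with
  | zero => intro Φ; simp [tp]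
  | succ n ih =>
    intro Φ
    have hs : ∀ {E : Type} [AddCommMonoid E] (F : (Fin (n+1) → X) → E),
        ∑ f, F f = ∑ x, ∑ f : Fin n → X, F (Fin.cons x f) := by
      intro E _ F
      rw [← (Fin.consEquiv (fun _ => X)).sum_comp, Fintype.sum_prod_type]
      rfl
    rw [hs, hs]
    have h1 : ∀ x (f : Fin n → X), ∑ g, tp (n+1) M (Fin.cons x f) g * Φ g =
        ∑ y, M x y * ∑ g : Fin n → X, tp n M f g * Φ (Fin.cons y g) := by
      intro x f
      rw [hs]
      simp only [tp, of_apply, Fin.prod_univ_succ, Fin.cons_zero, Fin.cons_succ, Finset.mul_sum,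
        mul_assoc]
    simp only [h1]
    rw [Finset.sum_comm]
    calc _ ≤ ∑ f : Fin n → X, c * ∑ y, ‖∑ g : Fin n → X, tp n M f g * Φ (Fin.cons y g)‖^2 :=
          Finset.sum_le_sum fun f _ => hM _
      _ = c * ∑ y, ∑ f : Fin n → X, ‖∑ g : Fin n → X, tp n M f g * Φ (Fin.cons y g)‖^2 := by
          rw [← Finset.mul_sum, Finset.sum_comm]
      _ ≤ c * ∑ y, (c^n * ∑ f : Fin n → X, ‖Φ (Fin.cons y f)‖^2) := by
          gcongr with y
          exact ih _
      _ = _ := by rw [← Finset.mul_sum]; ring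


lemma tp_herm {X : Type*} [Fintype X] (n : ℕ) (M : Matrix X X ℂ) (h : Mᴴ = M) :
    (tp n M)ᴴ = tp n M := by
  ext f g
  simp only [tp, conjTranspose_apply, of_apply, star_prod]
  refine Finset.prod_congr rfl fun i _ => ?_
  conv_rhs => rw [← h]
  rfl

def qE (d n : ℕ) : (Fin n → QX d) ≃
    ((Fin n → Fin d) × (Fin n → Fin d)) × ((Fin n → Fin d) × (Fin n → Fin d)) where
  toFun f := ((fun i => (f i).1.1, fun i => (f i).1.2), (fun i => (f i).2.1, fun i => (f i).2.2))
  invFun x := fun i => ((x.1.1 i, x.1.2 i), (x.2.1 i, x.2.2 i))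
  left_inv _ := rfl
  right_inv _ := rfl

def Phi {d n : ℕ} (ψ : (Fin n → Fin d) × (Fin n → Fin d) → ℂ) (f : Fin n → QX d) : ℂ :=
  ψ (qE d n f).1 * ψ (qE d n f).2

lemma Phi_range {d n : ℕ} (ψ : (Fin n → Fin d) × (Fin n → Fin d) → ℂ)
    (hrange : (asymPow d n).mulVec ψ = ψ) : tp n (RR d) *ᵥ Phi ψ = Phi ψ := by
  funext f
  have h : ∀ u, ∑ w, asymPow d n u w * ψ w = ψ u := fun u => congrFun hrange u
  simp only [mulVec, dotProduct]
  rw [← (qE d n).symm.sum_comp, Fintype.sum_prod_type]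
  conv_rhs => rw [Phi, ← h, ← h (qE d n f).2, Finset.sum_mul_sum]
  refine Finset.sum_congr rfl fun u _ => Finset.sum_congr rfl fun w _ => ?_
  simp only [tp, of_apply, RR_apply, Finset.prod_mul_distrib, Phi, asymPow, Equiv.apply_symm_apply]
  simp only [qE, Equiv.coe_fn_mk, Equiv.coe_fn_symm_mk]
  ring

lemma Phi_norm {d n : ℕ} (ψ : (Fin n → Fin d) × (Fin n → Fin d) → ℂ)
    (hψ : ∑ v, Complex.normSq (ψ v) = 1) : ∑ f, ‖Phi ψ f‖^2 = 1 := by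
  rw [← (qE d n).symm.sum_comp, Fintype.sum_prod_type]
  simp only [Phi, Equiv.apply_symm_apply, norm_mul, mul_pow]
  rw [← Finset.sum_mul_sum]
  simp only [← Complex.normSq_eq_norm_sq, hψ, one_mul]

def sFS {d n : ℕ} (S : Finset (Fin n)) (f : Fin n → QX d) : Fin n → QX d :=
  fun i => if i ∈ S then sF (f i) else f i

def ES {d n : ℕ} (ψ : (Fin n → Fin d) × (Fin n → Fin d) → ℂ) (S : Finset (Fin n)) : ℂ :=
  ∑ f, star (Phi ψ f) * Phi ψ (sFS S f)

lemma kk_expand {d n : ℕ} (ψ : (Fin n → Fin d) × (Fin n → Fin d) → ℂ) :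
    star (Phi ψ) ⬝ᵥ (tp n (kk d) *ᵥ Phi ψ) =
      ∑ S : Finset (Fin n), (((1/4 : ℝ) ^ (Finset.univ \ S).card : ℝ) : ℂ) * ES ψ S := by
  have h1 : ∀ f g : Fin n → QX d, tp n (kk d) f g =
      ∑ S : Finset (Fin n), (((1/4 : ℝ) ^ (Finset.univ \ S).card : ℝ) : ℂ) *
        (if g = sFS S f then 1 else 0) := by
    intro f g
    simp only [tp, of_apply, kk, Matrix.add_apply, Uperm]
    simp only [add_comm (((1/4 : ℂ) • (1 : Matrix (QX d) (QX d) ℂ)) _ _)]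
    rw [Finset.prod_add, Finset.powerset_univ]
    refine Finset.sum_congr rfl fun S _ => ?_
    simp only [Matrix.smul_apply, smul_eq_mul, Finset.prod_mul_distrib, Finset.prod_const,
      Matrix.one_apply]
    rw [mul_left_comm]
    congr 1
    · push_cast; rfl
    · rw [Finset.prod_ite_zero, Finset.prod_ite_zero]
      simp only [Finset.prod_const_one]
      rw [ite_zero_mul_ite_zero, mul_one]
      refine if_congr ?_ rfl rfl
      constructor
      · rintro ⟨ha, hb⟩
        funext i
        by_cases hi : i ∈ S
        · simp [sFS, hi, ha i hi]
        · simp [sFS, hi, hb i (by simp [hi])]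
      · rintro rfl
        refine ⟨fun i hi => by simp [sFS, hi], fun i hi => ?_⟩
        have : i ∉ S := by simpa using hi
        simp [sFS, this]
  have h2 : ∀ f, (tp n (kk d) *ᵥ Phi ψ) f =
      ∑ S : Finset (Fin n), (((1/4 : ℝ) ^ (Finset.univ \ S).card : ℝ) : ℂ) * Phi ψ (sFS S f) := by
    intro f
    simp only [mulVec, dotProduct, h1, Finset.sum_mul]
    rw [Finset.sum_comm]
    refine Finset.sum_congr rfl fun S _ => ?_
    simp only [mul_assoc]
    rw [← Finset.mul_sum]
    simp
  simp only [dotProduct, h2, ES, Finset.mul_sum, Pi.star_apply]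
  rw [Finset.sum_comm]
  refine Finset.sum_congr rfl fun S _ => Finset.sum_congr rfl fun f _ => ?_
  ring

def glue {d n : ℕ} (S : Finset (Fin n)) (x : {i // i ∈ S} → Fin d) (y : {i // ¬ i ∈ S} → Fin d) :
    Fin n → Fin d := fun i => if h : i ∈ S then x ⟨i, h⟩ else y ⟨i, h⟩

lemma sum_glue {d n : ℕ} (S : Finset (Fin n)) (F : (Fin n → Fin d) → ℂ) :
    ∑ a, F a = ∑ x, ∑ y, F (glue S x y) := by
  rw [← (Equiv.piEquivPiSubtypeProd (· ∈ S) (fun _ => Fin d)).symm.sum_comp,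
    Fintype.sum_prod_type]
  rfl

lemma ES_eq {d n : ℕ} (ψ : (Fin n → Fin d) × (Fin n → Fin d) → ℂ) (S : Finset (Fin n)) :
    ES ψ S = ∑ a, ∑ b, ∑ c, ∑ e, star (ψ (a, b)) * star (ψ (c, e)) *
      (ψ (fun i => if i ∈ S then c i else a i, b) * ψ (fun i => if i ∈ S then a i else c i, e)) := by
  rw [ES, ← (qE d n).symm.sum_comp]
  simp only [Fintype.sum_prod_type]
  refine Finset.sum_congr rfl fun a _ => Finset.sum_congr rfl fun b _ =>
    Finset.sum_congr rfl fun c _ => Finset.sum_congr rfl fun e _ => ?_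
  simp only [Phi, Equiv.apply_symm_apply, star_mul']
  congr 1
  congr 2 <;>
  · simp only [qE, Equiv.coe_fn_mk, Equiv.coe_fn_symm_mk, sFS, Prod.mk.injEq]
    constructor <;> (funext i; by_cases hi : i ∈ S <;> simp [hi, sF])

lemma ES_nonneg {d n : ℕ} (ψ : (Fin n → Fin d) × (Fin n → Fin d) → ℂ) (S : Finset (Fin n)) :
    0 ≤ (ES ψ S).re := by
  have h : ES ψ S = ∑ x, ∑ z, (((Complex.normSq (∑ y, ∑ b, star (ψ (glue S x y, b)) *
      ψ (glue S z y, b))) : ℝ) : ℂ) := by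
    rw [ES_eq, sum_glue S]
    refine Finset.sum_congr rfl fun x _ => ?_
    have hg : ∀ (x z : {i // i ∈ S} → Fin d) (y w : {i // ¬ i ∈ S} → Fin d),
        (fun i => if i ∈ S then glue S z w i else glue S x y i) = glue S z y := by
      intro x z y w
      funext i
      by_cases hi : i ∈ S <;> simp [glue, hi]
    trans ∑ y, ∑ b, ∑ z, ∑ w, ∑ e, star (ψ (glue S x y, b)) * star (ψ (glue S z w, e)) *
      (ψ (glue S z y, b) * ψ (glue S x w, e))
    · refine Finset.sum_congr rfl fun y _ => Finset.sum_congr rfl fun b _ => ?_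
      rw [sum_glue S]
      simp only [hg]
    simp only [Complex.normSq_eq_conj_mul_self]
    conv_lhs =>
      enter [2, y]
      rw [Finset.sum_comm]
    rw [Finset.sum_comm]
    refine Finset.sum_congr rfl fun z _ => ?_
    simp only [map_sum, Finset.sum_mul, Finset.mul_sum]
    refine Finset.sum_congr rfl fun y _ => ?_
    refine Finset.sum_congr rfl fun b _ => ?_
    refine Finset.sum_congr rfl fun w _ => ?_
    refine Finset.sum_congr rfl fun e _ => ?_
    simp only [map_mul, starRingEnd_apply, star_star]
    ring
  rw [h]
  simp only [Complex.re_sum, Complex.ofReal_re]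
  exact Finset.sum_nonneg fun _ _ => Finset.sum_nonneg fun _ _ => Complex.normSq_nonneg _

lemma ES_univ {d n : ℕ} (ψ : (Fin n → Fin d) × (Fin n → Fin d) → ℂ) :
    (ES ψ Finset.univ).re =
      ∑ a, ∑ c, ‖ptraceSnd (Matrix.vecMulVec ψ (star ψ)) a c‖^2 := by
  have h : ES ψ Finset.univ =
      ((∑ a, ∑ c, ‖ptraceSnd (Matrix.vecMulVec ψ (star ψ)) a c‖^2 : ℝ) : ℂ) := by
    rw [ES_eq]
    simp only [← Complex.normSq_eq_norm_sq, Complex.ofReal_sum, ← Complex.mul_conj]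
    refine Finset.sum_congr rfl fun a _ => ?_
    rw [Finset.sum_comm]
    refine Finset.sum_congr rfl fun c _ => ?_
    simp only [ptraceSnd, of_apply, vecMulVec_apply, map_sum, Finset.sum_mul_sum]
    rw [Finset.sum_comm]
    refine Finset.sum_congr rfl fun e _ => Finset.sum_congr rfl fun b _ => ?_
    simp
    ring
  rw [h, Complex.ofReal_re]

lemma main_frob {d n : ℕ} (ψ : (Fin n → Fin d) × (Fin n → Fin d) → ℂ)
    (hψ : ∑ v, Complex.normSq (ψ v) = 1)
    (hrange : (asymPow d n).mulVec ψ = ψ) :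
    ∑ a, ∑ c, ‖ptraceSnd (Matrix.vecMulVec ψ (star ψ)) a c‖^2 ≤ (3/4 : ℝ)^n := by
  have hR := Phi_range ψ hrange
  have hN := Phi_norm ψ hψ
  have h1 : (ES ψ Finset.univ).re ≤ (star (Phi ψ) ⬝ᵥ (tp n (kk d) *ᵥ Phi ψ)).re := by
    rw [kk_expand]
    simp only [Complex.re_sum, Complex.re_ofReal_mul]
    refine le_trans (le_of_eq ?_) (Finset.single_le_sum (fun S _ =>
      mul_nonneg (by positivity) (ES_nonneg ψ S)) (Finset.mem_univ Finset.univ))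
    simp
  have h2 : star (Phi ψ) ⬝ᵥ (tp n (kk d) *ᵥ Phi ψ) =
      star (Phi ψ) ⬝ᵥ (tp n (KK d) *ᵥ Phi ψ) := by
    rw [KK, ← tp_mul, ← tp_mul, ← mulVec_mulVec, ← mulVec_mulVec, hR]
    rw [dotProduct_mulVec (star (Phi ψ)) (tp n (RR d)), ← tp_herm n _ (RR_herm d),
      ← star_mulVec, hR]
  have h3 := tp_bound (KK d) (9/16) (by norm_num) (KK_sum d) n (Phi ψ)
  rw [hN, mul_one] at h3
  rw [← ES_univ]
  refine h1.trans ?_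
  rw [h2]
  refine (Complex.re_le_norm _).trans ?_
  have h4 : ‖star (Phi ψ) ⬝ᵥ (tp n (KK d) *ᵥ Phi ψ)‖ ≤
      ∑ f, ‖Phi ψ f‖ * ‖∑ g, tp n (KK d) f g * Phi ψ g‖ := by
    refine (norm_sum_le _ _).trans (le_of_eq ?_)
    refine Finset.sum_congr rfl fun f _ => ?_
    rw [norm_mul, Pi.star_apply, norm_star]
    rfl
  refine h4.trans ?_
  have h5 := Finset.sum_mul_sq_le_sq_mul_sq Finset.univ (fun f => ‖Phi ψ f‖)
    (fun f => ‖∑ g, tp n (KK d) f g * Phi ψ g‖)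
  rw [hN, one_mul] at h5
  refine (fun h hb => (abs_le_of_sq_le_sq' h hb).2) (h5.trans (h3.trans (le_of_eq ?_))) (by positivity)
  rw [← pow_mul, mul_comm n 2, pow_mul]; norm_num

lemma opNorm_le_frob {ι : Type*} [Fintype ι] [DecidableEq ι] (M : Matrix ι ι ℂ) :
    opNorm M ≤ Real.sqrt (∑ a, ∑ c, ‖M a c‖^2) := by
  refine ContinuousLinearMap.opNorm_le_bound _ (Real.sqrt_nonneg _) fun x => ?_
  rw [EuclideanSpace.norm_eq, EuclideanSpace.norm_eq, ← Real.sqrt_mul (by positivity)]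
  apply Real.sqrt_le_sqrt
  rw [Finset.sum_mul]
  refine Finset.sum_le_sum fun a _ => ?_
  refine le_trans ?_ (Finset.sum_mul_sq_le_sq_mul_sq Finset.univ (fun c => ‖M a c‖)
    (fun c => ‖x c‖))
  refine pow_le_pow_left₀ (norm_nonneg _) ?_ 2
  have : (Matrix.toEuclideanCLM (𝕜 := ℂ) M x) a = ∑ c, M a c * x c := rfl
  rw [this]
  refine (norm_sum_le _ _).trans (le_of_eq ?_)
  simp

end helpers

/-- for every unit vector `ψ` in the range of `(P₂^{(d)})^{⊗n}`, the
reduced state `ψ_{A^n} = tr_{B^n} |ψ⟩⟨ψ|` satisfies `‖ψ_{A^n}‖_∞ ≤ (3/4)^{n/2}`. -/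
theorem opNorm_reduced_antisym_le (d n : ℕ) (hd : 2 ≤ d) (hn : 1 ≤ n)
    (ψ : (Fin n → Fin d) × (Fin n → Fin d) → ℂ)
    (hψ : ∑ v, Complex.normSq (ψ v) = 1)
    (hrange : (asymPow d n).mulVec ψ = ψ) :
    opNorm (ptraceSnd (Matrix.vecMulVec ψ (star ψ))) ≤ Real.sqrt ((3 / 4 : ℝ) ^ n) := by
  exact (opNorm_le_frob _).trans (Real.sqrt_le_sqrt (main_frob ψ hψ hrange))

end
end
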